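/- arXiv:1803.03488 — 8 statements merged into one kernel-verified Lean document; each statement's English description precedes it below -/
import Mathlib

section
/- Let ε > 0 and a ≠ 0. For every continuously differentiable function ũ : [0,1] → ℝ, the function v̄(x) = e^{−(a/ε)ũ(x)} − 1 is continuously differentiable and satisfies ‖v̄‖_{H¹} ≤ α₁(‖ũ‖_{H¹}), where α₁(s) = α̂(2s) + (|a|/ε)·e^{(2|a|/ε)s}·s and α̂(s) = (|a|s/ε)·e^{(|a|s/ε)}; moreover α₁ is a class-𝒦_∞ function (continuous, strictly increasing, α₁(0) = 0, unbounded). -/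
/-! The bound rests on the one-dimensional Sobolev inequality `sup |u| ≤ ‖u‖_{H¹}` on `[0,1]`
(`abs_le_H1norm`): compare `u x` with `u y` at a minimum point `y` of `u²`, where
`|u y| ≤ (∫ u²)^{1/2}`, and bound `∫ |u'|` by `(∫ u'²)^{1/2}`. Put `k = |a| / ε` and
`N = ‖ũ‖_{H¹}`. From `|e^y - 1| ≤ |y| e^{|y|}` one gets the pointwise bounds
`|v̄| ≤ k e^{kN} |ũ|` and `|v̄'| ≤ k e^{kN} |ũ'|`, which integrate to
`‖v̄‖_{H¹} ≤ k e^{kN} N`. On the other hand `α₁ s = 3 k s e^{2ks}` (`alphaOne_eq`), which dominates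
this bound at `s = N` and is visibly of class `𝒦_∞`. -/

noncomputable section

/-- The `H¹(0,1)` norm of a function: `‖u‖ = (∫₀¹ u²)^{1/2} + (∫₀¹ (u')²)^{1/2}`. -/
def H1norm (u : ℝ → ℝ) : ℝ :=
  Real.sqrt (∫ x in (0:ℝ)..1, u x ^ 2) + Real.sqrt (∫ x in (0:ℝ)..1, deriv u x ^ 2)

/-- `α̂(s) = (|a|s/ε)·e^{|a|s/ε}`. -/
def alphaHat (a ε s : ℝ) : ℝ := (|a| * s / ε) * Real.exp (|a| * s / ε)

/-- `α₁(s) = α̂(2s) + (|a|/ε)·e^{(2|a|/ε)s}·s`. -/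
def alphaOne (a ε s : ℝ) : ℝ :=
  alphaHat a ε (2 * s) + (|a| / ε) * Real.exp ((2 * |a| / ε) * s) * s

open intervalIntegral in
/-- Cauchy–Schwarz on `[0,1]` against the constant `1`. -/
lemma integral_le_sqrt_integral_sq {f : ℝ → ℝ} (hf : Continuous f) :
    ∫ x in (0:ℝ)..1, f x ≤ Real.sqrt (∫ x in (0:ℝ)..1, f x ^ 2) := by
  apply Real.le_sqrt_of_sq_le
  set m := ∫ x in (0:ℝ)..1, f x with hm
  -- the variance of `f` is nonnegative
  have h : 0 ≤ ∫ x in (0:ℝ)..1, (f x - m) ^ 2 :=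
    integral_nonneg zero_le_one fun x _ => sq_nonneg _
  have e : ∫ x in (0:ℝ)..1, (f x - m) ^ 2 =
      (∫ x in (0:ℝ)..1, f x ^ 2) - 2 * m * m + m ^ 2 := by
    have : ∀ x, (f x - m) ^ 2 = f x ^ 2 - 2 * m * f x + m ^ 2 := fun x => by ring
    simp_rw [this]
    rw [integral_add, integral_sub, integral_const_mul, ← hm, integral_const]
    · simp
    all_goals exact Continuous.intervalIntegrable (by fun_prop) _ _
  nlinarith

/-- The Sobolev embedding of `H¹(0,1)` into the bounded functions, with constant `1`. -/
lemma abs_le_H1norm {u : ℝ → ℝ} (hu : ContDiff ℝ 1 u) {x : ℝ} (hx : x ∈ Set.Icc (0:ℝ) 1) :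
    |u x| ≤ H1norm u := by
  have hc : Continuous u := hu.continuous
  have hd : Continuous (deriv u) := hu.continuous_deriv le_rfl
  obtain ⟨y, hy, hmin⟩ := isCompact_Icc.exists_isMinOn (Set.nonempty_Icc.2 zero_le_one)
    (hc.pow 2).continuousOn (s := Set.Icc (0:ℝ) 1)
  have h1 : |u y| ≤ Real.sqrt (∫ x in (0:ℝ)..1, u x ^ 2) := by
    apply Real.le_sqrt_of_sq_le
    rw [sq_abs]
    have := intervalIntegral.integral_mono_on (μ := MeasureTheory.volume)
      (f := fun _ => u y ^ 2) (g := fun x => u x ^ 2) zero_le_one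
      (by simp) ((hc.pow 2).intervalIntegrable 0 1) (fun z hz => hmin hz)
    simpa using this
  have h2 : |u x - u y| ≤ ∫ t in (0:ℝ)..1, |deriv u t| := by
    rw [← intervalIntegral.integral_deriv_eq_sub
      (fun t _ => (hu.differentiable one_ne_zero) t) (hd.intervalIntegrable y x)]
    have hsub : Set.uIoc y x ⊆ Set.uIoc 0 1 := by
      rw [Set.uIoc_of_le zero_le_one]
      exact Set.Ioc_subset_Ioc (le_min hy.1 hx.1) (max_le hy.2 hx.2)
    calc |∫ t in y..x, deriv u t| ≤ |∫ t in y..x, (|deriv u t|)| :=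
          by simpa only [Real.norm_eq_abs] using
            intervalIntegral.norm_integral_le_abs_integral_norm (f := deriv u) (a := y) (b := x)
              (μ := MeasureTheory.volume)
      _ ≤ |∫ t in (0:ℝ)..1, (|deriv u t|)| :=
          intervalIntegral.abs_integral_mono_interval hsub
            (Filter.Eventually.of_forall fun t => abs_nonneg _) (hd.abs.intervalIntegrable 0 1)
      _ = _ := abs_of_nonneg
          (intervalIntegral.integral_nonneg zero_le_one fun t _ => abs_nonneg _)
  have h3 := integral_le_sqrt_integral_sq hd.abs
  simp only [sq_abs] at h3
  have h4 := abs_add_le (u x - u y) (u y)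
  rw [sub_add_cancel] at h4
  unfold H1norm
  linarith

lemma sqrt_integral_sq_le {f g : ℝ → ℝ} (hf : Continuous f) (hg : Continuous g) {c : ℝ}
    (hc : 0 ≤ c) (h : ∀ x ∈ Set.Icc (0:ℝ) 1, |f x| ≤ c * |g x|) :
    Real.sqrt (∫ x in (0:ℝ)..1, f x ^ 2) ≤ c * Real.sqrt (∫ x in (0:ℝ)..1, g x ^ 2) := by
  rw [← Real.sqrt_sq hc, ← Real.sqrt_mul (sq_nonneg c), ← intervalIntegral.integral_const_mul]
  apply Real.sqrt_le_sqrt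
  refine intervalIntegral.integral_mono_on zero_le_one ((hf.pow 2).intervalIntegrable 0 1)
    ((continuous_const.mul (hg.pow 2)).intervalIntegrable 0 1) fun x hx => ?_
  rw [← sq_abs (f x), ← sq_abs (g x), ← mul_pow]
  exact pow_le_pow_left₀ (abs_nonneg _) (h x hx) 2

lemma abs_exp_sub_one_le_mul_exp (y : ℝ) : |Real.exp y - 1| ≤ |y| * Real.exp |y| := by
  have h1 := Real.add_one_le_exp y
  rcases le_total 0 y with hy | hy
  · rw [abs_of_nonneg hy, abs_of_nonneg (by linarith)]
    have h2 := Real.add_one_le_exp (-y)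
    have h3 : Real.exp (-y) * Real.exp y = 1 := by rw [← Real.exp_add]; simp
    nlinarith [Real.exp_pos y]
  · have h2 : Real.exp y ≤ 1 := Real.exp_le_one_iff.2 hy
    rw [abs_of_nonpos hy, abs_of_nonpos (by linarith)]
    have h3 : 1 ≤ Real.exp (-y) := Real.one_le_exp (by linarith)
    nlinarith

lemma alphaOne_eq (a ε s : ℝ) : alphaOne a ε s =
    3 * (|a| / ε) * (s * Real.exp (2 * (|a| / ε) * s)) := by
  unfold alphaOne alphaHat
  rw [show |a| * (2 * s) / ε = 2 * (|a| / ε) * s by ring,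
    show 2 * |a| / ε * s = 2 * (|a| / ε) * s by ring]
  ring

/-- For every `C¹` function `ũ` on `[0,1]`, the function `v̄(x) = e^{−(a/ε)ũ(x)} − 1` is `C¹`
and satisfies `‖v̄‖_{H¹} ≤ α₁(‖ũ‖_{H¹})`; moreover `α₁` is of class `𝒦_∞` on `[0,∞)`. -/
theorem linearizing_transformation_H1_bound (ε a : ℝ) (hε : 0 < ε) (ha : a ≠ 0) :
    (∀ utilde : ℝ → ℝ, ContDiff ℝ 1 utilde →
      ContDiff ℝ 1 (fun x => Real.exp (-(a / ε) * utilde x) - 1) ∧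
      H1norm (fun x => Real.exp (-(a / ε) * utilde x) - 1) ≤ alphaOne a ε (H1norm utilde)) ∧
    ContinuousOn (alphaOne a ε) (Set.Ici 0) ∧
    StrictMonoOn (alphaOne a ε) (Set.Ici 0) ∧
    alphaOne a ε 0 = 0 ∧
    Filter.Tendsto (alphaOne a ε) Filter.atTop Filter.atTop := by
  have hk : 0 < |a| / ε := div_pos (abs_pos.2 ha) hε
  have hfun : alphaOne a ε = fun s => 3 * (|a| / ε) * (s * Real.exp (2 * (|a| / ε) * s)) :=
    funext (alphaOne_eq a ε)
  refine ⟨fun u hu => ?_, ?_, ?_, ?_, ?_⟩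
  · have hv : ContDiff ℝ 1 (fun x => Real.exp (-(a / ε) * u x) - 1) := by fun_prop
    refine ⟨hv, ?_⟩
    rw [hfun]
    set k := |a| / ε with hkdef
    have habs : |-(a / ε)| = k := by rw [abs_neg, abs_div, abs_of_pos hε]
    have hN : 0 ≤ H1norm u := by unfold H1norm; positivity
    have hexp : ∀ x ∈ Set.Icc (0:ℝ) 1, Real.exp |-(a / ε) * u x| ≤ Real.exp (k * H1norm u) := by
      intro x hx
      rw [abs_mul, habs]
      exact Real.exp_le_exp.2 (mul_le_mul_of_nonneg_left (abs_le_H1norm hu hx) hk.le)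
    set E := Real.exp (k * H1norm u) with hE
    have hE0 : 0 < E := Real.exp_pos _
    have hderiv : ∀ x, deriv (fun x => Real.exp (-(a / ε) * u x) - 1) x =
        Real.exp (-(a / ε) * u x) * (-(a / ε) * deriv u x) := fun x =>
      ((((hu.differentiable one_ne_zero) x).hasDerivAt.const_mul _).exp.sub_const 1).deriv
    have b1 := sqrt_integral_sq_le hv.continuous hu.continuous (mul_pos hk hE0).le
      fun x hx => by
        refine (abs_exp_sub_one_le_mul_exp _).trans ?_
        refine (mul_le_mul_of_nonneg_left (hexp x hx) (abs_nonneg _)).trans_eq ?_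
        rw [abs_mul, habs]; ring
    have b2 := sqrt_integral_sq_le (hv.continuous_deriv le_rfl) (hu.continuous_deriv le_rfl)
      (mul_pos hk hE0).le fun x hx => by
        rw [hderiv, abs_mul, abs_mul, habs, Real.abs_exp]
        have := (Real.exp_le_exp.2 (le_abs_self (-(a / ε) * u x))).trans (hexp x hx)
        calc _ ≤ E * (k * |deriv u x|) := mul_le_mul_of_nonneg_right this (by positivity)
          _ = _ := by ring
    have hEE : E ≤ Real.exp (2 * k * H1norm u) :=
      Real.exp_le_exp.2 (by nlinarith [mul_nonneg hk.le hN])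
    calc H1norm (fun x => Real.exp (-(a / ε) * u x) - 1) ≤ k * E * H1norm u := by
          refine (add_le_add b1 b2).trans_eq ?_
          rw [← mul_add, H1norm]
      _ ≤ k * Real.exp (2 * k * H1norm u) * H1norm u := by gcongr
      _ ≤ 3 * (k * Real.exp (2 * k * H1norm u) * H1norm u) := by
          linarith [show 0 ≤ k * Real.exp (2 * k * H1norm u) * H1norm u by positivity]
      _ = _ := by ring
  · rw [hfun]
    exact Continuous.continuousOn (by fun_prop)
  · rw [hfun]
    intro s hs t _ hst
    have hs' : 0 ≤ s := hs
    have he : Real.exp (2 * (|a| / ε) * s) < Real.exp (2 * (|a| / ε) * t) := by gcongr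
    have : s * Real.exp (2 * (|a| / ε) * s) < t * Real.exp (2 * (|a| / ε) * t) :=
      mul_lt_mul'' hst he hs' (Real.exp_pos _).le
    exact mul_lt_mul_of_pos_left this (by positivity)
  · simp [alphaOne_eq]
  · rw [hfun]
    have h : Filter.Tendsto (fun s : ℝ => 2 * (|a| / ε) * s) Filter.atTop Filter.atTop :=
      Filter.tendsto_id.const_mul_atTop (by positivity)
    exact (Filter.tendsto_id.atTop_mul_atTop₀ (Real.tendsto_exp_atTop.comp h)).const_mul_atTop
      (by positivity)

end
end

section
/- Let ε > 0, a ≠ 0, b ∈ ℝ, and let r : [0,1] → ℝ be continuously differentiable with sup_{x ∈ [0,1]} |r(x)| ≤ c̄·e^{−|ab/(2ε)|} for some constant c̄ ∈ (0,1) and sup_{x ∈ [0,1]} |r′(x)| ≤ R for some R > 0. Then there exist positive constants ξ₁ and ξ₂, depending only on a, b, ε, c̄ and R, such that for every continuously differentiable v̄ : [0,1] → ℝ, the function ṽ(x) = v̄(x)·(r(x) + e^{−(ab/2ε)x}) satisfies ξ₂^{−1}·‖v̄‖_{H¹} ≤ ‖ṽ‖_{H¹} ≤ ξ₁·‖v̄‖_{H¹},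 i.e., both ‖ṽ‖_{H¹} ≤ ξ₁‖v̄‖_{H¹} and ‖v̄‖_{H¹} ≤ ξ₂‖ṽ‖_{H¹} hold. -/
/-!
Write `w x = r x + exp (-k x)` with `k = a b / (2 ε)`, so that `ṽ = v̄ w`. On `[0,1]` the weight is
bounded above, its derivative is bounded, and `w ≥ (1 - c̄) exp (-|k|) > 0`. The product rule
`ṽ' = v̄' w + v̄ w'` therefore bounds `|ṽ|` by `|v̄|` and `|ṽ'|` by `|v̄| + |v̄'|` pointwise, up to
constants, and solving it for `v̄'` gives the reverse bounds. Such pointwise bounds integrate to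
bounds on `H1norm` (`H1norm_le_of_pointwise`).
-/

noncomputable section

/-- Pointwise domination of `f` by `g`, and of `f'` by `|g| + |g'|`, on `[0,1]` gives domination of
the `H¹` norms. It is stated for the pair `(f, g)` rather than for a multiplier `f / g`, since the
reciprocal of the weight is controlled on `[0,1]` only. -/
theorem H1norm_le_of_pointwise {f g : ℝ → ℝ} (hf : ContDiff ℝ 1 f) (hg : ContDiff ℝ 1 g)
    {C : ℝ} (hC : 0 ≤ C) (h0 : ∀ x ∈ Set.Icc (0:ℝ) 1, |f x| ≤ C * |g x|)
    (h1 : ∀ x ∈ Set.Icc (0:ℝ) 1, |deriv f x| ≤ C * (|g x| + |deriv g x|)) :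
    H1norm f ≤ 4 * C * H1norm g := by
  have cf := hf.continuous
  have cg := hg.continuous
  have cf' := hf.continuous_deriv le_rfl
  have cg' := hg.continuous_deriv le_rfl
  have I0 : ∫ x in (0:ℝ)..1, f x ^ 2 ≤ C ^ 2 * ∫ x in (0:ℝ)..1, g x ^ 2 := by
    rw [← intervalIntegral.integral_const_mul]
    refine intervalIntegral.integral_mono_on zero_le_one
      (Continuous.intervalIntegrable (by fun_prop) _ _)
      (Continuous.intervalIntegrable (by fun_prop) _ _) fun x hx => ?_
    have := pow_le_pow_left₀ (abs_nonneg _) (h0 x hx) 2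
    rwa [mul_pow, sq_abs, sq_abs] at this
  have I1 : ∫ x in (0:ℝ)..1, deriv f x ^ 2 ≤
      2 * C ^ 2 * ((∫ x in (0:ℝ)..1, g x ^ 2) + ∫ x in (0:ℝ)..1, deriv g x ^ 2) := by
    rw [← intervalIntegral.integral_add (Continuous.intervalIntegrable (by fun_prop) _ _)
      (Continuous.intervalIntegrable (by fun_prop) _ _), ← intervalIntegral.integral_const_mul]
    refine intervalIntegral.integral_mono_on zero_le_one
      (Continuous.intervalIntegrable (by fun_prop) _ _)
      (Continuous.intervalIntegrable (by fun_prop) _ _) fun x hx => ?_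
    have h := pow_le_pow_left₀ (abs_nonneg _) (h1 x hx) 2
    rw [mul_pow, sq_abs] at h
    have h2 : (|g x| + |deriv g x|) ^ 2 ≤ 2 * (g x ^ 2 + deriv g x ^ 2) := by
      rw [← sq_abs (g x), ← sq_abs (deriv g x)]
      exact add_sq_le
    nlinarith [mul_le_mul_of_nonneg_left h2 (sq_nonneg C)]
  have p0 : 0 ≤ ∫ x in (0:ℝ)..1, g x ^ 2 :=
    intervalIntegral.integral_nonneg zero_le_one fun x _ => sq_nonneg _
  have p1 : 0 ≤ ∫ x in (0:ℝ)..1, deriv g x ^ 2 :=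
    intervalIntegral.integral_nonneg zero_le_one fun x _ => sq_nonneg _
  unfold H1norm
  generalize (∫ x in (0:ℝ)..1, g x ^ 2) = G0 at *
  generalize (∫ x in (0:ℝ)..1, deriv g x ^ 2) = G1 at *
  have s0 := Real.sqrt_nonneg G0
  have s1 := Real.sqrt_nonneg G1
  have e0 := Real.sq_sqrt p0
  have e1 := Real.sq_sqrt p1
  have K0 : √(∫ x in (0:ℝ)..1, f x ^ 2) ≤ C * √G0 :=
    Real.sqrt_le_iff.2 ⟨by positivity, by rw [mul_pow, e0]; exact I0⟩
  have K1 : √(∫ x in (0:ℝ)..1, deriv f x ^ 2) ≤ 2 * C * (√G0 + √G1) := by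
    refine Real.sqrt_le_iff.2 ⟨by positivity, I1.trans ?_⟩
    have h : G0 + G1 ≤ (√G0 + √G1) ^ 2 := by nlinarith [mul_nonneg s0 s1]
    have h' := mul_le_mul_of_nonneg_left h (sq_nonneg C)
    nlinarith [mul_nonneg (sq_nonneg C) (sq_nonneg (√G0 + √G1))]
  nlinarith [mul_nonneg hC s0, mul_nonneg hC s1]

/-- There are constants `ξ₁, ξ₂ > 0`, depending only on `a, b, ε, c̄, R`, such that for every
`C¹` map `r` on `[0,1]` with `sup |r| ≤ c̄·e^{−|ab/(2ε)|}`, `c̄ ∈ (0,1)`, and `sup |r'| ≤ R`,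
and every `C¹` map `v̄`, the function `ṽ(x) = v̄(x)(r(x) + e^{−(ab/2ε)x})` satisfies
`‖ṽ‖_{H¹} ≤ ξ₁‖v̄‖_{H¹}` and `‖v̄‖_{H¹} ≤ ξ₂‖ṽ‖_{H¹}`. -/
theorem weighted_equivalence_H1 (ε a b cbar R : ℝ) (hε : 0 < ε) (ha : a ≠ 0)
    (hc0 : 0 < cbar) (hc1 : cbar < 1) (hR : 0 < R) :
    ∃ ξ₁ > (0:ℝ), ∃ ξ₂ > (0:ℝ),
      ∀ r : ℝ → ℝ, ContDiff ℝ 1 r →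
        (∀ x ∈ Set.Icc (0:ℝ) 1, |r x| ≤ cbar * Real.exp (-|a * b / (2 * ε)|)) →
        (∀ x ∈ Set.Icc (0:ℝ) 1, |deriv r x| ≤ R) →
        ∀ vbar : ℝ → ℝ, ContDiff ℝ 1 vbar →
          H1norm (fun x => vbar x * (r x + Real.exp (-(a * b / (2 * ε)) * x))) ≤
              ξ₁ * H1norm vbar ∧
          H1norm vbar ≤
              ξ₂ * H1norm (fun x => vbar x * (r x + Real.exp (-(a * b / (2 * ε)) * x))) := by
  set k := a * b / (2 * ε) with hk
  set m := (1 - cbar) * Real.exp (-|k|) with hm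
  set E := Real.exp |k| with hE
  have hE0 : 0 < E := Real.exp_pos _
  have hm0 : 0 < m := mul_pos (by linarith) (Real.exp_pos _)
  -- `L` bounds `|w'|` and `M` bounds `|w|` on `[0,1]`, where `w = r + exp (-k ·)`.
  set L := R + |k| * E with hL
  set M := 1 + E with hM
  have hL0 : 0 < L := by positivity
  have hM0 : 0 < M := by positivity
  refine ⟨4 * (M + L), by positivity, 4 * (1 / m + L / m ^ 2), by positivity, ?_⟩
  intro r hr hr0 hr1 v hv
  have hw : ContDiff ℝ 1 fun x => r x + Real.exp (-k * x) := by fun_prop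
  have hvw : ContDiff ℝ 1 fun x => v x * (r x + Real.exp (-k * x)) := hv.mul hw
  have dw (x : ℝ) : HasDerivAt (fun x => r x + Real.exp (-k * x))
      (deriv r x + Real.exp (-k * x) * (-k)) x := by
    have h1 := (hr.differentiable one_ne_zero x).hasDerivAt
    have h2 : HasDerivAt (fun x => -k * x) (-k) x := by
      simpa using (hasDerivAt_id x).const_mul (-k)
    exact h1.add h2.exp
  have dvw (x : ℝ) : deriv (fun x => v x * (r x + Real.exp (-k * x))) x =
      deriv v x * (r x + Real.exp (-k * x)) + v x * (deriv r x + Real.exp (-k * x) * (-k)) :=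
    ((hv.differentiable one_ne_zero x).hasDerivAt.mul (dw x)).deriv
  have hkx : ∀ x ∈ Set.Icc (0:ℝ) 1, |-k * x| ≤ |k| := fun x hx => by
    rw [abs_mul, abs_neg, abs_of_nonneg hx.1]
    exact mul_le_of_le_one_right (abs_nonneg _) hx.2
  have hup : ∀ x ∈ Set.Icc (0:ℝ) 1, Real.exp (-k * x) ≤ E := fun x hx =>
    Real.exp_le_exp.2 (abs_le.1 (hkx x hx)).2
  have hlo : ∀ x ∈ Set.Icc (0:ℝ) 1, Real.exp (-|k|) ≤ Real.exp (-k * x) := fun x hx =>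
    Real.exp_le_exp.2 (abs_le.1 (hkx x hx)).1
  have wlo : ∀ x ∈ Set.Icc (0:ℝ) 1, m ≤ r x + Real.exp (-k * x) := fun x hx => by
    have h1 := (abs_le.1 (hr0 x hx)).1
    have h2 := hlo x hx
    rw [hm]; linarith
  have wup : ∀ x ∈ Set.Icc (0:ℝ) 1, |r x + Real.exp (-k * x)| ≤ M := fun x hx => by
    rw [abs_of_pos (hm0.trans_le (wlo x hx))]
    have h1 := (abs_le.1 (hr0 x hx)).2
    have h2 := hup x hx
    have h3 : Real.exp (-|k|) ≤ 1 := Real.exp_le_one_iff.2 (by simp)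
    have h4 : cbar * Real.exp (-|k|) ≤ 1 := mul_le_one₀ hc1.le (Real.exp_pos _).le h3
    linarith
  have dwup : ∀ x ∈ Set.Icc (0:ℝ) 1, |deriv r x + Real.exp (-k * x) * (-k)| ≤ L :=
    fun x hx => by
    refine (abs_add_le _ _).trans (add_le_add (hr1 x hx) ?_)
    rw [abs_mul, abs_neg, abs_of_pos (Real.exp_pos _), mul_comm]
    exact mul_le_mul_of_nonneg_left (hup x hx) (abs_nonneg _)
  constructor
  · refine H1norm_le_of_pointwise hvw hv (by positivity) (fun x hx => ?_) fun x hx => ?_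
    · rw [abs_mul, mul_comm]
      exact mul_le_mul_of_nonneg_right (by linarith [wup x hx]) (abs_nonneg _)
    · rw [dvw]
      refine (abs_add_le _ _).trans ?_
      rw [abs_mul, abs_mul]
      have h1 := mul_le_mul_of_nonneg_left (wup x hx) (abs_nonneg (deriv v x))
      have h2 := mul_le_mul_of_nonneg_left (dwup x hx) (abs_nonneg (v x))
      nlinarith [mul_nonneg hM0.le (abs_nonneg (v x)), mul_nonneg hL0.le (abs_nonneg (deriv v x))]
  · have key : ∀ x ∈ Set.Icc (0:ℝ) 1, ∀ y : ℝ,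
        |y| ≤ 1 / m * |y * (r x + Real.exp (-k * x))| := fun x hx y => by
      rw [abs_mul, abs_of_pos (hm0.trans_le (wlo x hx)), one_div, inv_mul_eq_div,
        le_div_iff₀ hm0]
      exact mul_le_mul_of_nonneg_left (wlo x hx) (abs_nonneg _)
    refine H1norm_le_of_pointwise hv hvw (by positivity) (fun x hx => ?_) fun x hx => ?_
    · refine (key x hx (v x)).trans (mul_le_mul_of_nonneg_right ?_ (abs_nonneg _))
      exact le_add_of_nonneg_right (by positivity)
    · have e : deriv v x * (r x + Real.exp (-k * x)) =
          deriv (fun x => v x * (r x + Real.exp (-k * x))) x -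
            v x * (deriv r x + Real.exp (-k * x) * (-k)) := by rw [dvw]; ring
      have h1 := key x hx (deriv v x)
      rw [e] at h1
      have h2 := abs_sub (deriv (fun x => v x * (r x + Real.exp (-k * x))) x)
        (v x * (deriv r x + Real.exp (-k * x) * (-k)))
      rw [abs_mul (v x)] at h2
      have h3 := mul_le_mul (key x hx (v x)) (dwup x hx) (abs_nonneg _) (by positivity)
      generalize deriv (fun x => v x * (r x + Real.exp (-k * x))) x = D at *
      generalize v x * (r x + Real.exp (-k * x)) = W at *
      calc |deriv v x| ≤ 1 / m * (|D| + 1 / m * |W| * L) :=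
            h1.trans (mul_le_mul_of_nonneg_left (by linarith) (by positivity))
        _ = 1 / m * |D| + L / m ^ 2 * |W| := by field_simp
        _ ≤ (1 / m + L / m ^ 2) * (|W| + |D|) := by
            have p1 : 0 ≤ 1 / m * |W| := by positivity
            have p2 : 0 ≤ L / m ^ 2 * |D| := by positivity
            linarith

end
end

section
/- Let γ ∈ [1,2) and F, M > 0. If f : [0,∞) → ℝ belongs to the Gevrey class G_{F,M,γ}([0,∞)), then the function g(t) = e^{f(t)} − 1 belongs to the Gevrey class G_{F₁,M₁,γ}([0,∞)) with F₁ = F·e^F and M₁ = M·e^F; that is, sup_{t ≥ 0} |g^{(n)}(t)| ≤ F·e^F·(M·e^F)^n·(n!)^γ for all integers n ≥ 0. -/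
/-!
Put `h = e^f` and `q = e^F`. Since `h' = f' h`, the Leibniz rule expresses `h⁽ⁿ⁺¹⁾` as
`∑ k ≤ n, C(n,k) f⁽ᵏ⁺¹⁾ h⁽ⁿ⁻ᵏ⁾`. As `γ ≥ 1`, the factorials satisfy
`C(n,k) (k+1)!^γ (n-k)!^γ ≤ (n+1)!^γ` (`choose_mul_factorial_rpow_le`), so strong induction gives
`|h⁽ⁿ⁾| ≤ q Mⁿ n!^γ dₙ` for any sequence with `d₀ = 1` and `F ∑ m ≤ n, d_m ≤ dₙ₊₁`.
The choice `dₙ₊₁ = F qⁿ` works because `F ≤ q - 1` makes the geometric sum telescope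
(`sum_expCoeff_le`). For `n ≥ 1` this is stronger than the claimed bound on
`g⁽ⁿ⁾ = h⁽ⁿ⁾`; for `n = 0` the claim is `|e^x - 1| ≤ F e^F` when `|x| ≤ F`.
-/

noncomputable section

/-- `f` belongs to the Gevrey class `G_{F,M,γ}([0,∞))`: it is infinitely differentiable and
`sup_{t ≥ 0} |f⁽ⁿ⁾(t)| ≤ F·Mⁿ·(n!)^γ` for all `n ≥ 0`. -/
def InGevrey (F M γ : ℝ) (f : ℝ → ℝ) : Prop :=
  ContDiff ℝ (⊤ : ℕ∞) f ∧
    ∀ n : ℕ, ∀ t : ℝ, 0 ≤ t →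
      |iteratedDeriv n f t| ≤ F * M ^ n * (Nat.factorial n : ℝ) ^ γ

lemma choose_mul_factorial_rpow_le {γ : ℝ} (hγ : 1 ≤ γ) {n k : ℕ} (hk : k ≤ n) :
    (n.choose k : ℝ) * ((k + 1).factorial : ℝ) ^ γ * ((n - k).factorial : ℝ) ^ γ
      ≤ ((n + 1).factorial : ℝ) ^ γ := by
  have hC : (1 : ℝ) ≤ n.choose k := by exact_mod_cast Nat.choose_pos hk
  have hnat : n.choose k * (k + 1).factorial * (n - k).factorial ≤ (n + 1).factorial := by
    have h := Nat.choose_mul_factorial_mul_factorial hk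
    rw [Nat.factorial_succ, Nat.factorial_succ, ← h]
    calc n.choose k * ((k + 1) * k.factorial) * (n - k).factorial
        = (k + 1) * (n.choose k * k.factorial * (n - k).factorial) := by ring
      _ ≤ (n + 1) * (n.choose k * k.factorial * (n - k).factorial) := by gcongr
  calc (n.choose k : ℝ) * ((k + 1).factorial : ℝ) ^ γ * ((n - k).factorial : ℝ) ^ γ
      ≤ (n.choose k : ℝ) ^ γ * ((k + 1).factorial : ℝ) ^ γ * ((n - k).factorial : ℝ) ^ γ := by
        gcongr
        exact Real.self_le_rpow_of_one_le hC hγ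
    _ = ((n.choose k : ℝ) * ((k + 1).factorial : ℝ) * ((n - k).factorial : ℝ)) ^ γ := by
        rw [Real.mul_rpow (by positivity) (by positivity),
          Real.mul_rpow (by positivity) (by positivity)]
    _ ≤ ((n + 1).factorial : ℝ) ^ γ := by
        gcongr
        exact_mod_cast hnat

/-- The majorizing sequence `1, F, F e^F, F e^{2F}, …` for the normalized derivatives of `e^f`. -/
def expCoeff (F : ℝ) : ℕ → ℝ
  | 0 => 1
  | n + 1 => F * Real.exp F ^ n

lemma sum_expCoeff_le {F : ℝ} (n : ℕ) :
    ∑ k ∈ Finset.range (n + 1), expCoeff F k ≤ Real.exp F ^ n := by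
  induction n with
  | zero => simp [expCoeff]
  | succ n ih =>
    rw [Finset.sum_range_succ, pow_succ]
    have h1 := Real.add_one_le_exp F
    have h2 : 0 < Real.exp F ^ n := by positivity
    change _ + F * Real.exp F ^ n ≤ _
    nlinarith

lemma abs_iteratedDeriv_exp_le {γ F M : ℝ} (hγ : 1 ≤ γ) (hF : 0 < F) (hM : 0 < M) {f : ℝ → ℝ}
    (hf : InGevrey F M γ f) {t : ℝ} (ht : 0 ≤ t) (n : ℕ) :
    |iteratedDeriv n (fun s => Real.exp (f s)) t| ≤
      Real.exp F * M ^ n * (n.factorial : ℝ) ^ γ * expCoeff F n := by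
  obtain ⟨hs, hb⟩ := hf
  induction n using Nat.strong_induction_on with
  | _ n ih =>
  cases n with
  | zero =>
    have h0 := hb 0 t ht
    simp only [iteratedDeriv_zero, pow_zero, Nat.factorial_zero, Nat.cast_one, Real.one_rpow,
      mul_one] at h0
    simpa [expCoeff] using (le_abs_self _).trans h0
  | succ n =>
    have hd : deriv (fun s => Real.exp (f s)) = fun s => deriv f s * Real.exp (f s) := by
      ext s
      have h := ((hs.differentiable (by simp)) s).hasDerivAt.exp.deriv
      rw [h, mul_comm]
    have hs' : ContDiff ℝ n (deriv f) :=
      (contDiff_succ_iff_deriv.1 (hs.of_le (m := n + 1) (by exact_mod_cast le_top))).2.2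
    have hse : ContDiff ℝ n (fun s => Real.exp (f s)) :=
      (hs.of_le (m := n) (by exact_mod_cast le_top)).exp
    rw [iteratedDeriv_succ', hd, iteratedDeriv_fun_mul hs'.contDiffAt hse.contDiffAt]
    have hterm : ∀ k ∈ Finset.range (n + 1),
        |(n.choose k : ℝ) * iteratedDeriv k (deriv f) t *
          iteratedDeriv (n - k) (fun s => Real.exp (f s)) t| ≤
        Real.exp F * M ^ (n + 1) * ((n + 1).factorial : ℝ) ^ γ * F * expCoeff F (n - k) := by
      intro k hk
      have hkn : k ≤ n := Nat.lt_succ_iff.1 (Finset.mem_range.1 hk)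
      have h1 := hb (k + 1) t ht
      rw [iteratedDeriv_succ'] at h1
      have h2 := ih (n - k) (by omega)
      have hc : 0 ≤ expCoeff F (n - k) := by
        cases n - k <;> simp only [expCoeff] <;> positivity
      have hpow : M ^ (n + 1) = M ^ (k + 1) * M ^ (n - k) := by
        rw [← pow_add]; congr 1; omega
      rw [abs_mul, abs_mul, Nat.abs_cast]
      calc _ ≤ (n.choose k : ℝ) * (F * M ^ (k + 1) * ((k + 1).factorial : ℝ) ^ γ) *
            (Real.exp F * M ^ (n - k) * ((n - k).factorial : ℝ) ^ γ * expCoeff F (n - k)) := by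
            gcongr
        _ = Real.exp F * M ^ (n + 1) * ((n.choose k : ℝ) * ((k + 1).factorial : ℝ) ^ γ *
              ((n - k).factorial : ℝ) ^ γ) * F * expCoeff F (n - k) := by
            rw [hpow]; ring
        _ ≤ _ := by
            gcongr
            exact choose_mul_factorial_rpow_le hγ hkn
    have hrefl : ∑ k ∈ Finset.range (n + 1), expCoeff F (n - k) =
        ∑ k ∈ Finset.range (n + 1), expCoeff F k := by
      simpa using Finset.sum_range_reflect (expCoeff F) (n + 1)
    refine (Finset.abs_sum_le_sum_abs _ _).trans ((Finset.sum_le_sum hterm).trans ?_)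
    rw [← Finset.mul_sum, hrefl]
    calc _ ≤ Real.exp F * M ^ (n + 1) * ((n + 1).factorial : ℝ) ^ γ * F * Real.exp F ^ n := by
          gcongr
          exact sum_expCoeff_le n
      _ = _ := by simp only [expCoeff]; ring

/-- If `f ∈ G_{F,M,γ}` with `γ ∈ [1,2)`, then `g(t) = e^{f(t)} − 1` belongs to
`G_{F·e^F, M·e^F, γ}`. -/
theorem gevrey_exp_sub_one (γ F M : ℝ) (hγ1 : 1 ≤ γ) (hγ2 : γ < 2)
    (hF : 0 < F) (hM : 0 < M) (f : ℝ → ℝ) (hf : InGevrey F M γ f) :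
    InGevrey (F * Real.exp F) (M * Real.exp F) γ (fun t => Real.exp (f t) - 1) := by
  refine ⟨hf.1.exp.sub contDiff_const, fun n t ht => ?_⟩
  cases n with
  | zero =>
    have h0 := hf.2 0 t ht
    simp only [iteratedDeriv_zero, pow_zero, Nat.factorial_zero, Nat.cast_one, Real.one_rpow,
      mul_one] at h0 ⊢
    obtain ⟨hl, hu⟩ := abs_le.1 h0
    have hq : 1 ≤ Real.exp F := Real.one_le_exp hF.le
    have hx := Real.add_one_le_exp (f t)
    have hmono := Real.exp_le_exp.2 hu
    -- `e^F - 1 ≤ F e^F` is `1 - F ≤ e^{-F}` multiplied by `e^F`.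
    have hF1 : Real.exp F - 1 ≤ F * Real.exp F := by
      have h := Real.add_one_le_exp (-F)
      have h' : Real.exp (-F) * Real.exp F = 1 := by rw [← Real.exp_add]; simp
      nlinarith
    rw [abs_le]
    constructor <;> nlinarith
  | succ n =>
    have hd : iteratedDeriv (n + 1) (fun s => Real.exp (f s) - 1) =
        iteratedDeriv (n + 1) (fun s => Real.exp (f s)) := by
      rw [iteratedDeriv_succ', iteratedDeriv_succ']
      congr 1
      ext s
      simp
    rw [hd]
    refine (abs_iteratedDeriv_exp_le hγ1 hF hM hf ht (n + 1)).trans ?_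
    have hq : 1 ≤ Real.exp F := Real.one_le_exp hF.le
    simp only [expCoeff]
    calc _ = F * Real.exp F * M ^ (n + 1) * Real.exp F ^ n * ((n + 1).factorial : ℝ) ^ γ := by
          ring
      _ ≤ F * Real.exp F * M ^ (n + 1) * Real.exp F ^ (n + 1) *
            ((n + 1).factorial : ℝ) ^ γ := by
          gcongr
          omega
      _ = _ := by rw [mul_pow]; ring

end
end

section
/- Let ε > 0, a, b ∈ ℝ, x₀ ∈ [0,1] and γ ∈ [1,2). Let y₁, y₂ : [0,∞) → ℝ be infinitely differentiable with sup_{t ≥ 0}|y₁^{(n)}(t)| ≤ F̄₁·M̄₁^n·(n!)^γ and sup_{t ≥ 0}|y₂^{(n)}(t)| ≤ F̄₂·M̄₂^n·(n!)^γ for all n ≥ 0, where F̄₁, F̄₂, M̄₁, M̄₂ > 0. Then: (i) for i = 1, 2, the series l_i = Σ_{k=0}^∞ ε^{−k}·(k!)^{γ−2}·(a²b²/(4ε) + M̄_i)^k converges; (ii) for all x ∈ [0,1] and t ≥ 0 the double series v(x,t) = Σ_{k=0}^∞ ε^{−k}((x−x₀)^{2k}/(2k)!)·Σ_{m=0}^k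 C(k,m)(a²b²/(4ε))^{k−m}·y₁^{(m)}(t) + Σ_{k=0}^∞ ε^{−k}((x−x₀)^{2k+1}/(2k+1)!)·Σ_{m=0}^k C(k,m)(a²b²/(4ε))^{k−m}·y₂^{(m)}(t) converges absolutely; and (iii) |v(x,t)| ≤ F̄₁·l₁ + F̄₂·l₂ ≤ max{F̄₁, F̄₂}·(l₁ + l₂) for all x ∈ [0,1] and t ≥ 0. -/
/-!
Write `A = a²b²/(4ε)`. Since `m! ≤ k!` for `m ≤ k`, the Gevrey bound and the binomial theorem bound
the inner sum by `F (k!)^γ (A + M)^k` (`abs_inner_sum_le`). As `|x - x₀| ≤ 1` and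
`(k!)² ≤ (2k)! ≤ (2k+1)!`, the coefficients in front of it are at most `ε⁻ᵏ (k!)⁻²`, so each term of
either series is dominated by `F` times the corresponding term of `l` (`abs_term_le`). The series `l`
converges by the ratio test: consecutive terms have ratio `ε⁻¹ (k+1)^(γ-2) (A + M) → 0` because
`γ < 2` (`summable_lTerm`). Comparison gives absolute convergence and the bound.
-/

noncomputable section

/-- The `k`-th term of the first (even-power) series in the motion-planning solution. -/
def planTerm1 (ε a b x₀ : ℝ) (y₁ : ℝ → ℝ) (x t : ℝ) (k : ℕ) : ℝ :=
  (1 / ε ^ k) * ((x - x₀) ^ (2 * k) / (Nat.factorial (2 * k) : ℝ)) *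
    ∑ m ∈ Finset.range (k + 1),
      (Nat.choose k m : ℝ) * (a ^ 2 * b ^ 2 / (4 * ε)) ^ (k - m) * iteratedDeriv m y₁ t

/-- The `k`-th term of the second (odd-power) series in the motion-planning solution. -/
def planTerm2 (ε a b x₀ : ℝ) (y₂ : ℝ → ℝ) (x t : ℝ) (k : ℕ) : ℝ :=
  (1 / ε ^ k) * ((x - x₀) ^ (2 * k + 1) / (Nat.factorial (2 * k + 1) : ℝ)) *
    ∑ m ∈ Finset.range (k + 1),
      (Nat.choose k m : ℝ) * (a ^ 2 * b ^ 2 / (4 * ε)) ^ (k - m) * iteratedDeriv m y₂ t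

/-- The motion-planning series `v(x,t)`. -/
def vPlan (ε a b x₀ : ℝ) (y₁ y₂ : ℝ → ℝ) (x t : ℝ) : ℝ :=
  (∑' k : ℕ, planTerm1 ε a b x₀ y₁ x t k) + ∑' k : ℕ, planTerm2 ε a b x₀ y₂ x t k

/-- The `k`-th term of the majorizing series `l_i`. -/
def lTerm (ε a b γ Mb : ℝ) (k : ℕ) : ℝ :=
  (1 / ε ^ k) * (Nat.factorial k : ℝ) ^ (γ - 2) * (a ^ 2 * b ^ 2 / (4 * ε) + Mb) ^ k

theorem summable_lTerm {ε a b γ M : ℝ} (hε : 0 < ε) (hγ2 : γ < 2) (hM : 0 < M) :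
    Summable (lTerm ε a b γ M) := by
  have hA : 0 < a ^ 2 * b ^ 2 / (4 * ε) + M := by positivity
  have hpos : ∀ k, 0 < lTerm ε a b γ M k := fun k => by
    have : (0 : ℝ) < (Nat.factorial k : ℝ) := by positivity
    unfold lTerm
    positivity
  refine summable_of_ratio_test_tendsto_lt_one (l := 0) one_pos
    (Filter.Eventually.of_forall fun k => (hpos k).ne') ?_
  have hratio : ∀ k : ℕ, ‖lTerm ε a b γ M (k + 1)‖ / ‖lTerm ε a b γ M k‖ =
      (1 / ε * (a ^ 2 * b ^ 2 / (4 * ε) + M)) * ((k + 1 : ℕ) : ℝ) ^ (-(2 - γ)) := fun k => by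
    rw [Real.norm_of_nonneg (hpos _).le, Real.norm_of_nonneg (hpos _).le,
      div_eq_iff (hpos k).ne']
    unfold lTerm
    rw [Nat.factorial_succ, Nat.cast_mul, Real.mul_rpow (by positivity) (by positivity),
      neg_sub, pow_succ, pow_succ]
    field_simp
  simp_rw [hratio]
  have h := (tendsto_rpow_neg_atTop (sub_pos.2 hγ2)).comp
    (tendsto_natCast_atTop_atTop.comp (Filter.tendsto_add_atTop_nat 1) :
      Filter.Tendsto (fun k : ℕ => ((k + 1 : ℕ) : ℝ)) Filter.atTop Filter.atTop)
  simpa using h.const_mul (1 / ε * (a ^ 2 * b ^ 2 / (4 * ε) + M))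

theorem abs_inner_sum_le {A γ F M : ℝ} (hA : 0 ≤ A) (hγ : 0 ≤ γ) (hF : 0 ≤ F) (hM : 0 ≤ M)
    {d : ℕ → ℝ} (hd : ∀ n, |d n| ≤ F * M ^ n * (Nat.factorial n : ℝ) ^ γ) (k : ℕ) :
    |∑ m ∈ Finset.range (k + 1), (Nat.choose k m : ℝ) * A ^ (k - m) * d m| ≤
      F * (Nat.factorial k : ℝ) ^ γ * (A + M) ^ k := by
  rw [add_comm A M, add_pow, Finset.mul_sum]
  refine (Finset.abs_sum_le_sum_abs _ _).trans (Finset.sum_le_sum fun m hm => ?_)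
  have hmk : m ≤ k := Nat.lt_succ_iff.1 (Finset.mem_range.1 hm)
  have hfac : (Nat.factorial m : ℝ) ^ γ ≤ (Nat.factorial k : ℝ) ^ γ :=
    Real.rpow_le_rpow (by positivity) (by exact_mod_cast Nat.factorial_le hmk) hγ
  rw [abs_mul, abs_of_nonneg (by positivity : 0 ≤ (Nat.choose k m : ℝ) * A ^ (k - m))]
  calc (Nat.choose k m : ℝ) * A ^ (k - m) * |d m|
      ≤ (Nat.choose k m : ℝ) * A ^ (k - m) * (F * M ^ m * (Nat.factorial k : ℝ) ^ γ) := by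
        gcongr
        exact (hd m).trans (by gcongr)
    _ = _ := by ring

theorem abs_pow_div_factorial_le {u : ℝ} (hu : |u| ≤ 1) {k n : ℕ} (hn : 2 * k ≤ n) (j : ℕ) :
    |u ^ j / (Nat.factorial n : ℝ)| ≤ 1 / (Nat.factorial k : ℝ) ^ 2 := by
  have h : k.factorial ^ 2 ≤ n.factorial := by
    rw [sq]
    exact (Nat.le_of_dvd (Nat.factorial_pos _)
      (Nat.factorial_mul_factorial_dvd_factorial_add k k)).trans (Nat.factorial_le (by omega))
  rw [abs_div, abs_pow, Nat.abs_cast]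
  have h' : (k.factorial : ℝ) ^ 2 ≤ n.factorial := by exact_mod_cast h
  exact div_le_div₀ zero_le_one (pow_le_one₀ (abs_nonneg u) hu) (by positivity) h'

/-- Common majorant for the terms of both series; `w` stands for the coefficient
`(x - x₀) ^ j / j!` with `j = 2k` or `j = 2k + 1`. -/
theorem abs_term_le {ε a b γ F M w : ℝ} (hε : 0 < ε) (hγ : 0 ≤ γ) (hF : 0 ≤ F) (hM : 0 ≤ M)
    {d : ℕ → ℝ} (hd : ∀ n, |d n| ≤ F * M ^ n * (Nat.factorial n : ℝ) ^ γ) (k : ℕ)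
    (hw : |w| ≤ 1 / (Nat.factorial k : ℝ) ^ 2) :
    |(1 / ε ^ k) * w * ∑ m ∈ Finset.range (k + 1),
      (Nat.choose k m : ℝ) * (a ^ 2 * b ^ 2 / (4 * ε)) ^ (k - m) * d m| ≤
      F * lTerm ε a b γ M k := by
  have hA : 0 ≤ a ^ 2 * b ^ 2 / (4 * ε) := by positivity
  have hk : (0 : ℝ) < (Nat.factorial k : ℝ) := by positivity
  rw [abs_mul, abs_mul, abs_of_nonneg (by positivity : 0 ≤ 1 / ε ^ k)]
  calc _ ≤ 1 / ε ^ k * (1 / (Nat.factorial k : ℝ) ^ 2) *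
        (F * (Nat.factorial k : ℝ) ^ γ * (a ^ 2 * b ^ 2 / (4 * ε) + M) ^ k) := by
        gcongr
        exact abs_inner_sum_le hA hγ hF hM hd k
    _ = _ := by
        unfold lTerm
        rw [Real.rpow_sub hk, Real.rpow_two]
        ring

/-- Convergence and uniform bound for the motion-planning series under Gevrey-type bounds
on the outputs. -/
theorem vPlan_convergence_and_bound (ε a b x₀ γ : ℝ) (hε : 0 < ε)
    (hx₀ : x₀ ∈ Set.Icc (0:ℝ) 1) (hγ1 : 1 ≤ γ) (hγ2 : γ < 2)
    (Fb₁ Fb₂ Mb₁ Mb₂ : ℝ) (hF1 : 0 < Fb₁) (hF2 : 0 < Fb₂) (hM1 : 0 < Mb₁) (hM2 : 0 < Mb₂)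
    (y₁ y₂ : ℝ → ℝ) (hy₁ : ContDiff ℝ (⊤ : ℕ∞) y₁) (hy₂ : ContDiff ℝ (⊤ : ℕ∞) y₂)
    (hb₁ : ∀ n : ℕ, ∀ t : ℝ, 0 ≤ t →
      |iteratedDeriv n y₁ t| ≤ Fb₁ * Mb₁ ^ n * (Nat.factorial n : ℝ) ^ γ)
    (hb₂ : ∀ n : ℕ, ∀ t : ℝ, 0 ≤ t →
      |iteratedDeriv n y₂ t| ≤ Fb₂ * Mb₂ ^ n * (Nat.factorial n : ℝ) ^ γ) :
    Summable (lTerm ε a b γ Mb₁) ∧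
    Summable (lTerm ε a b γ Mb₂) ∧
    ∀ x ∈ Set.Icc (0:ℝ) 1, ∀ t : ℝ, 0 ≤ t →
      Summable (fun k : ℕ => |planTerm1 ε a b x₀ y₁ x t k|) ∧
      Summable (fun k : ℕ => |planTerm2 ε a b x₀ y₂ x t k|) ∧
      |vPlan ε a b x₀ y₁ y₂ x t| ≤
        Fb₁ * (∑' k : ℕ, lTerm ε a b γ Mb₁ k) + Fb₂ * (∑' k : ℕ, lTerm ε a b γ Mb₂ k) ∧
      Fb₁ * (∑' k : ℕ, lTerm ε a b γ Mb₁ k) + Fb₂ * (∑' k : ℕ, lTerm ε a b γ Mb₂ k) ≤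
        max Fb₁ Fb₂ * ((∑' k : ℕ, lTerm ε a b γ Mb₁ k) + ∑' k : ℕ, lTerm ε a b γ Mb₂ k) := by
  have hγ : 0 ≤ γ := by linarith
  have hl₁ := summable_lTerm (a := a) (b := b) hε hγ2 hM1
  have hl₂ := summable_lTerm (a := a) (b := b) hε hγ2 hM2
  have hnonneg : ∀ M : ℝ, 0 < M → ∀ k, 0 ≤ lTerm ε a b γ M k := fun M hM k => by
    unfold lTerm
    positivity
  refine ⟨hl₁, hl₂, fun x hx t ht => ?_⟩
  have hu : |x - x₀| ≤ 1 := abs_le.2 ⟨by linarith [hx.1, hx₀.2], by linarith [hx.2, hx₀.1]⟩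
  have h₁ : ∀ k, |planTerm1 ε a b x₀ y₁ x t k| ≤ Fb₁ * lTerm ε a b γ Mb₁ k := fun k =>
    abs_term_le hε hγ hF1.le hM1.le (fun n => hb₁ n t ht) k
      (abs_pow_div_factorial_le hu le_rfl _)
  have h₂ : ∀ k, |planTerm2 ε a b x₀ y₂ x t k| ≤ Fb₂ * lTerm ε a b γ Mb₂ k := fun k =>
    abs_term_le hε hγ hF2.le hM2.le (fun n => hb₂ n t ht) k
      (abs_pow_div_factorial_le hu (Nat.le_succ _) _)
  refine ⟨(hl₁.mul_left Fb₁).of_nonneg_of_le (fun _ => abs_nonneg _) h₁,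
    (hl₂.mul_left Fb₂).of_nonneg_of_le (fun _ => abs_nonneg _) h₂, ?_, ?_⟩
  · exact (abs_add_le _ _).trans (add_le_add
      (tsum_of_norm_bounded (f := planTerm1 ε a b x₀ y₁ x t) (hl₁.hasSum.mul_left Fb₁) h₁)
      (tsum_of_norm_bounded (f := planTerm2 ε a b x₀ y₂ x t) (hl₂.hasSum.mul_left Fb₂) h₂))
  · rw [mul_add]
    exact add_le_add
      (mul_le_mul_of_nonneg_right (le_max_left _ _) (tsum_nonneg (hnonneg _ hM1)))
      (mul_le_mul_of_nonneg_right (le_max_right _ _) (tsum_nonneg (hnonneg _ hM2)))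

end
end

section
/- Let ε > 0, a, b ∈ ℝ, x₀ ∈ [0,1] and γ ∈ [1,2). Let y₁, y₂ : [0,∞) → ℝ be infinitely differentiable with sup_{t ≥ 0}|y_i^{(n)}(t)| ≤ F̄·M̄^n·(n!)^γ for all n ≥ 0 and i = 1, 2, where F̄, M̄ > 0. Define v(x,t) = Σ_{k=0}^∞ ε^{−k}((x−x₀)^{2k}/(2k)!)·Σ_{m=0}^k C(k,m)(a²b²/(4ε))^{k−m}·y₁^{(m)}(t) + Σ_{k=0}^∞ ε^{−k}((x−x₀)^{2k+1}/(2k+1)!)·Σ_{m=0}^k C(k,m)(a²b²/(4ε))^{k−m}·y₂^{(m)}(t). Then the series converges for all x ∈ [0,1] and t ≥ 0, v is twice continuously differentiable in x and once continuously differentiable in t on [0,1]×(0,∞), and v satisfies v_t(x,t) = ε·v_{xx}(x,t) − (a²b²/(4ε))·v(x,t) for all x ∈ [0,1], t > 0, together with the interpolation conditions v(x₀,t) = y₁(t) and v_x(x₀,t) = y₂(t) for all t ≥ 0. -/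
/-!
Writing `μ = a²b²/(4ε)`, the coefficients `c_k = ε⁻ᵏ (d/dt + μ)ᵏ y` satisfy
`c_k' = ε c_{k+1} - μ c_k` by Pascal's rule, and the Gevrey bound on `y` gives
`|c_k| ≤ F Kᵏ (k!)^γ` with `K = (M + μ) / ε`.

Everything is expressed through the shifted series
`S_{p,j}(x,t) = ∑ₖ c_{k+j}(t) (x - x₀)^{2k+p} / (2k+p)!`. Since `γ < 2`, the factor `(2k+p)!`
beats `((k+j)!)^γ`, so on `|x - x₀| < 2`, `t ≥ 0` each of these series has a summable majorant
that depends on neither `x` nor `t` (ratio test, `summable_majorant`). Hence all of them are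
continuous and can be differentiated term by term:
`∂ₓ S_{p+1,j} = S_{p,j}` and `∂ₜ S_{p,j} = ε S_{p,j+1} - μ S_{p,j}`; splitting off the constant
term, `S_{0,j} = c_j + S_{2,j+1}`, gives `∂ₓ S_{0,j} = S_{1,j+1}`.
With `v = S_{0,0}[y₁] + S_{1,0}[y₂]`, this yields `∂ₓ²v = S_{0,1}[y₁] + S_{1,1}[y₂]`, and the
equation follows.
-/

noncomputable section

open Set Filter Topology

/-- The coefficient `ε⁻ᵏ (d/dt + μ)ᵏ y`, expanded by the binomial formula. -/
def planCoeff (ε μ : ℝ) (y : ℝ → ℝ) (k : ℕ) (t : ℝ) : ℝ :=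
  (1 / ε ^ k) * ∑ m ∈ Finset.range (k + 1),
    (Nat.choose k m : ℝ) * μ ^ (k - m) * iteratedDeriv m y t

/-- The `k`-th term of the series with coefficients shifted by `j` and powers shifted by `p`. -/
def shiftTerm (c : ℕ → ℝ → ℝ) (x₀ : ℝ) (p j : ℕ) (x t : ℝ) (k : ℕ) : ℝ :=
  c (k + j) t * ((x - x₀) ^ (2 * k + p) / (Nat.factorial (2 * k + p) : ℝ))

/-- The series `∑ₖ c_{k+j}(t) (x - x₀)^{2k+p} / (2k+p)!`. -/
def shiftSeries (c : ℕ → ℝ → ℝ) (x₀ : ℝ) (p j : ℕ) (x t : ℝ) : ℝ :=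
  ∑' k : ℕ, shiftTerm c x₀ p j x t k

/-- The bound for `shiftTerm` on `|x - x₀| ≤ 2` coming from `|c_k| ≤ F Kᵏ (k!)^γ`. -/
def majorant (F K γ : ℝ) (p j k : ℕ) : ℝ :=
  F * K ^ (k + j) * (Nat.factorial (k + j) : ℝ) ^ γ *
    (2 ^ (2 * k + p) / (Nat.factorial (2 * k + p) : ℝ))

/-- The quotient of consecutive terms is at most a constant times `(k+1)^(γ-2)`. -/
lemma summable_majorant {F K γ : ℝ} (hF : 0 ≤ F) (hK : 0 ≤ K) (hγ0 : 0 ≤ γ) (hγ : γ < 2)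
    (p j : ℕ) : Summable (majorant F K γ p j) := by
  have hlim : Tendsto (fun k : ℕ => 4 * K * ((j : ℝ) + 1) ^ γ * ((k : ℝ) + 1) ^ (γ - 2))
      atTop (𝓝 0) := by
    have h1 : Tendsto (fun k : ℕ => ((k : ℝ) + 1)) atTop atTop :=
      tendsto_atTop_add_const_right _ _ tendsto_natCast_atTop_atTop
    have h2 := (tendsto_rpow_neg_atTop (y := 2 - γ) (by linarith)).comp h1
    have h3 := h2.const_mul (4 * K * ((j : ℝ) + 1) ^ γ)
    simpa [Function.comp_def] using h3
  refine summable_of_ratio_norm_eventually_le (r := 1 / 2) (by norm_num) ?_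
  filter_upwards [hlim.eventually (ge_mem_nhds (by norm_num : (0 : ℝ) < 1 / 2))] with k hk
  have hnn : ∀ i, 0 ≤ majorant F K γ p j i := fun i => by unfold majorant; positivity
  rw [Real.norm_of_nonneg (hnn _), Real.norm_of_nonneg (hnn _)]
  have hstep : majorant F K γ p j (k + 1) = majorant F K γ p j k *
      (4 * K * ((k + j + 1 : ℕ) : ℝ) ^ γ / (((2 * k + p + 1 : ℕ) : ℝ) * ((2 * k + p + 2 : ℕ) : ℝ)))
      := by
    have e1 : (Nat.factorial (k + 1 + j) : ℝ) ^ γ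
        = ((k + j + 1 : ℕ) : ℝ) ^ γ * (Nat.factorial (k + j) : ℝ) ^ γ := by
      rw [show k + 1 + j = (k + j) + 1 by ring, Nat.factorial_succ, Nat.cast_mul,
        Real.mul_rpow (by positivity) (by positivity)]
    have e2 : (Nat.factorial (2 * (k + 1) + p) : ℝ)
        = ((2 * k + p + 1 : ℕ) : ℝ) * ((2 * k + p + 2 : ℕ) : ℝ) *
          (Nat.factorial (2 * k + p) : ℝ) := by
      rw [show 2 * (k + 1) + p = (2 * k + p + 1) + 1 by ring, Nat.factorial_succ,
        Nat.factorial_succ]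
      push_cast
      ring
    unfold majorant
    rw [e1, e2, show k + 1 + j = (k + j) + 1 by ring,
      show 2 * (k + 1) + p = (2 * k + p) + 2 by ring, pow_succ K, pow_add (2 : ℝ) _ 2]
    have : ((2 * k + p + 1 : ℕ) : ℝ) ≠ 0 := by positivity
    have : ((2 * k + p + 2 : ℕ) : ℝ) ≠ 0 := by positivity
    have : (Nat.factorial (2 * k + p) : ℝ) ≠ 0 := by positivity
    field_simp
    ring
  have hratio : 4 * K * ((k + j + 1 : ℕ) : ℝ) ^ γ /
      (((2 * k + p + 1 : ℕ) : ℝ) * ((2 * k + p + 2 : ℕ) : ℝ)) ≤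
      4 * K * ((j : ℝ) + 1) ^ γ * ((k : ℝ) + 1) ^ (γ - 2) := by
    have hk1 : (0 : ℝ) < (k : ℝ) + 1 := by positivity
    have hnum : ((k + j + 1 : ℕ) : ℝ) ^ γ ≤ ((j : ℝ) + 1) ^ γ * ((k : ℝ) + 1) ^ γ := by
      rw [← Real.mul_rpow (by positivity) (by positivity)]
      apply Real.rpow_le_rpow (by positivity) _ hγ0
      push_cast
      nlinarith [mul_nonneg (Nat.cast_nonneg (α := ℝ) j) (Nat.cast_nonneg (α := ℝ) k)]
    have hden : ((k : ℝ) + 1) ^ 2 ≤ ((2 * k + p + 1 : ℕ) : ℝ) * ((2 * k + p + 2 : ℕ) : ℝ) := by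
      rw [sq]
      push_cast
      have := Nat.cast_nonneg (α := ℝ) k
      have := Nat.cast_nonneg (α := ℝ) p
      apply mul_le_mul <;> first | positivity | linarith
    have e3 : ((k : ℝ) + 1) ^ (γ - 2) = ((k : ℝ) + 1) ^ γ / ((k : ℝ) + 1) ^ 2 := by
      rw [Real.rpow_sub hk1]
      norm_cast
    rw [e3, ← mul_div_assoc]
    apply div_le_div₀ (by positivity) _ (by positivity) hden
    calc 4 * K * ((k + j + 1 : ℕ) : ℝ) ^ γ
        ≤ 4 * K * (((j : ℝ) + 1) ^ γ * ((k : ℝ) + 1) ^ γ) := by gcongr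
      _ = _ := by ring
  rw [hstep, mul_comm (1 / 2 : ℝ)]
  exact mul_le_mul_of_nonneg_left (hratio.trans hk) (hnn k)

section Series

variable {c : ℕ → ℝ → ℝ} {F K γ : ℝ}

lemma abs_shiftTerm_le
    (hb : ∀ k t, 0 ≤ t → |c k t| ≤ F * K ^ k * (Nat.factorial k : ℝ) ^ γ)
    (x₀ : ℝ) (p j : ℕ) {x t : ℝ} (hx : |x - x₀| ≤ 2) (ht : 0 ≤ t) (k : ℕ) :
    ‖shiftTerm c x₀ p j x t k‖ ≤ majorant F K γ p j k := by
  unfold shiftTerm majorant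
  rw [Real.norm_eq_abs, abs_mul, abs_div, abs_pow, Nat.abs_cast]
  have h := hb (k + j) t ht
  exact mul_le_mul h (by gcongr) (by positivity) ((abs_nonneg _).trans h)

lemma summable_shiftTerm
    (hb : ∀ k t, 0 ≤ t → |c k t| ≤ F * K ^ k * (Nat.factorial k : ℝ) ^ γ)
    (hF : 0 ≤ F) (hK : 0 ≤ K) (hγ0 : 0 ≤ γ) (hγ : γ < 2)
    (x₀ : ℝ) (p j : ℕ) {x t : ℝ} (hx : |x - x₀| ≤ 2) (ht : 0 ≤ t) :
    Summable (shiftTerm c x₀ p j x t) :=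
  (summable_majorant hF hK hγ0 hγ p j).of_norm_bounded (abs_shiftTerm_le hb x₀ p j hx ht)

lemma hasDerivAt_shiftSeries_succ
    (hb : ∀ k t, 0 ≤ t → |c k t| ≤ F * K ^ k * (Nat.factorial k : ℝ) ^ γ)
    (hF : 0 ≤ F) (hK : 0 ≤ K) (hγ0 : 0 ≤ γ) (hγ : γ < 2)
    (x₀ : ℝ) (p j : ℕ) {x t : ℝ} (hx : |x - x₀| < 2) (ht : 0 ≤ t) :
    HasDerivAt (fun y => shiftSeries c x₀ (p + 1) j y t) (shiftSeries c x₀ p j x t) x := by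
  have hball : ∀ {y}, y ∈ Metric.ball x₀ 2 → |y - x₀| ≤ 2 := fun hy => by
    rw [Metric.mem_ball, Real.dist_eq] at hy
    exact hy.le
  have hx' : x ∈ Metric.ball x₀ 2 := by rwa [Metric.mem_ball, Real.dist_eq]
  refine hasDerivAt_tsum_of_isPreconnected
    (g := fun k y => shiftTerm c x₀ (p + 1) j y t k)
    (g' := fun k y => shiftTerm c x₀ p j y t k)
    (summable_majorant hF hK hγ0 hγ p j) Metric.isOpen_ball
    (convex_ball x₀ 2).isPreconnected ?_
    (fun k y hy => abs_shiftTerm_le hb x₀ p j (hball hy) ht k) hx'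
    (summable_shiftTerm hb hF hK hγ0 hγ x₀ (p + 1) j (hball hx') ht) hx'
  intro k y _
  unfold shiftTerm
  have h := ((((hasDerivAt_id y).sub_const x₀).pow (2 * k + (p + 1))).div_const
    (Nat.factorial (2 * k + (p + 1)) : ℝ)).const_mul (c (k + j) t)
  refine h.congr_deriv ?_
  rw [← add_assoc, Nat.factorial_succ]
  have h1 : ((2 * k + p + 1 : ℕ) : ℝ) ≠ 0 := by positivity
  have h2 : (Nat.factorial (2 * k + p) : ℝ) ≠ 0 := by positivity
  rw [Nat.cast_mul, Nat.add_sub_cancel]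
  simp only [id]
  field_simp

lemma shiftSeries_zero_eq
    (hb : ∀ k t, 0 ≤ t → |c k t| ≤ F * K ^ k * (Nat.factorial k : ℝ) ^ γ)
    (hF : 0 ≤ F) (hK : 0 ≤ K) (hγ0 : 0 ≤ γ) (hγ : γ < 2)
    (x₀ : ℝ) (j : ℕ) {x t : ℝ} (hx : |x - x₀| ≤ 2) (ht : 0 ≤ t) :
    shiftSeries c x₀ 0 j x t = c j t + shiftSeries c x₀ 2 (j + 1) x t := by
  unfold shiftSeries
  rw [(summable_shiftTerm hb hF hK hγ0 hγ x₀ 0 j hx ht).tsum_eq_zero_add]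
  congr 1
  · simp [shiftTerm]
  · refine tsum_congr fun k => ?_
    unfold shiftTerm
    rw [show k + 1 + j = k + (j + 1) by ring, show 2 * (k + 1) + 0 = 2 * k + 2 by ring]

lemma hasDerivAt_shiftSeries_zero
    (hb : ∀ k t, 0 ≤ t → |c k t| ≤ F * K ^ k * (Nat.factorial k : ℝ) ^ γ)
    (hF : 0 ≤ F) (hK : 0 ≤ K) (hγ0 : 0 ≤ γ) (hγ : γ < 2)
    (x₀ : ℝ) (j : ℕ) {x t : ℝ} (hx : |x - x₀| < 2) (ht : 0 ≤ t) :
    HasDerivAt (fun y => shiftSeries c x₀ 0 j y t) (shiftSeries c x₀ 1 (j + 1) x t) x := by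
  have h := (hasDerivAt_shiftSeries_succ hb hF hK hγ0 hγ x₀ 1 (j + 1) hx ht).const_add (c j t)
  refine h.congr_of_eventuallyEq ?_
  have hx' : x ∈ Metric.ball x₀ 2 := by rwa [Metric.mem_ball, Real.dist_eq]
  filter_upwards [Metric.isOpen_ball.mem_nhds hx'] with y hy
  rw [Metric.mem_ball, Real.dist_eq] at hy
  exact shiftSeries_zero_eq hb hF hK hγ0 hγ x₀ j hy.le ht

lemma hasDerivAt_shiftSeries_time
    (hb : ∀ k t, 0 ≤ t → |c k t| ≤ F * K ^ k * (Nat.factorial k : ℝ) ^ γ)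
    (hF : 0 ≤ F) (hK : 0 ≤ K) (hγ0 : 0 ≤ γ) (hγ : γ < 2)
    {ε μ : ℝ} (hc : ∀ k t, HasDerivAt (c k) (ε * c (k + 1) t - μ * c k t) t)
    (x₀ : ℝ) (p j : ℕ) {x t : ℝ} (hx : |x - x₀| ≤ 2) (ht : 0 < t) :
    HasDerivAt (fun s => shiftSeries c x₀ p j x s)
      (ε * shiftSeries c x₀ p (j + 1) x t - μ * shiftSeries c x₀ p j x t) t := by
  have hs : ∀ i, Summable (shiftTerm c x₀ p i x t) := fun i =>
    summable_shiftTerm hb hF hK hγ0 hγ x₀ p i hx ht.le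
  have key := hasDerivAt_tsum_of_isPreconnected
    (g := fun k s => shiftTerm c x₀ p j x s k)
    (g' := fun k s => ε * shiftTerm c x₀ p (j + 1) x s k - μ * shiftTerm c x₀ p j x s k)
    (t := Ioi 0)
    (((summable_majorant hF hK hγ0 hγ p (j + 1)).mul_left |ε|).add
      ((summable_majorant hF hK hγ0 hγ p j).mul_left |μ|)) isOpen_Ioi
    isPreconnected_Ioi ?_ ?_ (mem_Ioi.2 ht) (hs j) (mem_Ioi.2 ht)
  · refine key.congr_deriv ?_
    rw [((hs (j + 1)).mul_left ε).tsum_sub ((hs j).mul_left μ), tsum_mul_left, tsum_mul_left]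
    rfl
  · intro k s _
    unfold shiftTerm
    refine ((hc (k + j) s).mul_const _).congr_deriv ?_
    rw [← add_assoc]
    ring
  · intro k s hs'
    refine (norm_sub_le _ _).trans ?_
    rw [norm_mul, norm_mul, Real.norm_eq_abs ε, Real.norm_eq_abs μ]
    have h1 := abs_shiftTerm_le hb x₀ p (j + 1) hx (le_of_lt hs') k
    have h2 := abs_shiftTerm_le hb x₀ p j hx (le_of_lt hs') k
    gcongr

lemma continuousOn_shiftSeries
    (hb : ∀ k t, 0 ≤ t → |c k t| ≤ F * K ^ k * (Nat.factorial k : ℝ) ^ γ)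
    (hF : 0 ≤ F) (hK : 0 ≤ K) (hγ0 : 0 ≤ γ) (hγ : γ < 2) (hc : ∀ k, Continuous (c k))
    {x₀ : ℝ} (p j : ℕ) {s : Set ℝ} (hs : ∀ x ∈ s, |x - x₀| ≤ 2) :
    ContinuousOn (fun q : ℝ × ℝ => shiftSeries c x₀ p j q.1 q.2) (s ×ˢ Ioi 0) := by
  refine continuousOn_tsum (f := fun k (q : ℝ × ℝ) => shiftTerm c x₀ p j q.1 q.2 k) ?_
    (summable_majorant hF hK hγ0 hγ p j) ?_
  · intro k
    have := hc (k + j)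
    unfold shiftTerm
    fun_prop
  · intro k q hq
    exact abs_shiftTerm_le hb x₀ p j (hs _ hq.1) (le_of_lt hq.2) k

end Series

/-- The recursion `ε c_{k+1} = c_k' + μ c_k`. -/
lemma hasDerivAt_planCoeff {ε μ : ℝ} (hε : 0 < ε) {y : ℝ → ℝ} (hy : ContDiff ℝ (⊤ : ℕ∞) y)
    (k : ℕ) (t : ℝ) :
    HasDerivAt (planCoeff ε μ y k)
      (ε * planCoeff ε μ y (k + 1) t - μ * planCoeff ε μ y k t) t := by
  have hd : ∀ m, HasDerivAt (iteratedDeriv m y) (iteratedDeriv (m + 1) y t) t := fun m => by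
    rw [iteratedDeriv_succ]
    exact ((hy.differentiable_iteratedDeriv m (by exact_mod_cast ENat.natCast_lt_top m)) t).hasDerivAt
  have h := (HasDerivAt.fun_sum (u := Finset.range (k + 1)) fun m _ =>
    (hd m).const_mul ((Nat.choose k m : ℝ) * μ ^ (k - m))).const_mul (1 / ε ^ k)
  refine h.congr_deriv ?_
  have pascal := Finset.sum_choose_succ_mul (fun i l => μ ^ l * iteratedDeriv i y t) k
  simp only [← mul_assoc] at pascal
  have hshift : ∑ i ∈ Finset.range (k + 1), (Nat.choose k i : ℝ) * μ ^ (k + 1 - i) *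
      iteratedDeriv i y t = μ * ∑ i ∈ Finset.range (k + 1), (Nat.choose k i : ℝ) * μ ^ (k - i) *
      iteratedDeriv i y t := by
    rw [Finset.mul_sum]
    refine Finset.sum_congr rfl fun i hi => ?_
    rw [Nat.succ_sub (Nat.lt_succ_iff.1 (Finset.mem_range.1 hi)), pow_succ]
    ring
  unfold planCoeff
  rw [pascal, hshift, pow_succ]
  field_simp
  ring

/-- Gevrey bounds pass from `y` to the coefficients, by the binomial formula and `m! ≤ k!`. -/
lemma abs_planCoeff_le {ε μ F M γ : ℝ} (hε : 0 < ε) (hμ : 0 ≤ μ) (hF : 0 ≤ F) (hM : 0 ≤ M)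
    (hγ : 0 ≤ γ) {y : ℝ → ℝ}
    (hb : ∀ n : ℕ, ∀ t : ℝ, 0 ≤ t →
      |iteratedDeriv n y t| ≤ F * M ^ n * (Nat.factorial n : ℝ) ^ γ)
    (k : ℕ) (t : ℝ) (ht : 0 ≤ t) :
    |planCoeff ε μ y k t| ≤ F * ((M + μ) / ε) ^ k * (Nat.factorial k : ℝ) ^ γ := by
  have hsum : |∑ m ∈ Finset.range (k + 1), (Nat.choose k m : ℝ) * μ ^ (k - m) *
      iteratedDeriv m y t| ≤ F * (M + μ) ^ k * (Nat.factorial k : ℝ) ^ γ := by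
    refine (Finset.abs_sum_le_sum_abs _ _).trans ?_
    rw [add_pow, Finset.mul_sum, Finset.sum_mul]
    refine Finset.sum_le_sum fun m hm => ?_
    have hmk : m ≤ k := Nat.lt_succ_iff.1 (Finset.mem_range.1 hm)
    rw [abs_mul, abs_of_nonneg (by positivity : 0 ≤ (Nat.choose k m : ℝ) * μ ^ (k - m))]
    calc (Nat.choose k m : ℝ) * μ ^ (k - m) * |iteratedDeriv m y t|
        ≤ (Nat.choose k m : ℝ) * μ ^ (k - m) * (F * M ^ m * (Nat.factorial m : ℝ) ^ γ) := by
          gcongr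
          exact hb m t ht
      _ ≤ (Nat.choose k m : ℝ) * μ ^ (k - m) * (F * M ^ m * (Nat.factorial k : ℝ) ^ γ) := by
          gcongr
      _ = _ := by ring
  unfold planCoeff
  rw [abs_mul, abs_of_nonneg (by positivity : 0 ≤ 1 / ε ^ k), div_pow]
  calc 1 / ε ^ k * _ ≤ 1 / ε ^ k * (F * (M + μ) ^ k * (Nat.factorial k : ℝ) ^ γ) := by gcongr
    _ = _ := by ring

lemma planTerm1_eq (ε a b x₀ : ℝ) (y : ℝ → ℝ) (x t : ℝ) :
    planTerm1 ε a b x₀ y x t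
      = shiftTerm (planCoeff ε (a ^ 2 * b ^ 2 / (4 * ε)) y) x₀ 0 0 x t := by
  funext k
  simp only [planTerm1, shiftTerm, planCoeff, add_zero]
  ring

lemma planTerm2_eq (ε a b x₀ : ℝ) (y : ℝ → ℝ) (x t : ℝ) :
    planTerm2 ε a b x₀ y x t
      = shiftTerm (planCoeff ε (a ^ 2 * b ^ 2 / (4 * ε)) y) x₀ 1 0 x t := by
  funext k
  simp only [planTerm2, shiftTerm, planCoeff, add_zero]
  ring

lemma shiftSeries_succ_self (c : ℕ → ℝ → ℝ) (x₀ : ℝ) (p j : ℕ) (t : ℝ) :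
    shiftSeries c x₀ (p + 1) j x₀ t = 0 := by
  simp [shiftSeries, shiftTerm]

/-- The motion-planning series solves `v_t = ε v_{xx} − (a²b²/(4ε)) v` with
`v(x₀,t) = y₁(t)` and `v_x(x₀,t) = y₂(t)`. -/
theorem vPlan_solves_motion_planning (ε a b x₀ γ : ℝ) (hε : 0 < ε)
    (hx₀ : x₀ ∈ Set.Icc (0:ℝ) 1) (hγ1 : 1 ≤ γ) (hγ2 : γ < 2)
    (Fb Mb : ℝ) (hFb : 0 < Fb) (hMb : 0 < Mb)
    (y₁ y₂ : ℝ → ℝ) (hy₁ : ContDiff ℝ (⊤ : ℕ∞) y₁) (hy₂ : ContDiff ℝ (⊤ : ℕ∞) y₂)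
    (hb₁ : ∀ n : ℕ, ∀ t : ℝ, 0 ≤ t →
      |iteratedDeriv n y₁ t| ≤ Fb * Mb ^ n * (Nat.factorial n : ℝ) ^ γ)
    (hb₂ : ∀ n : ℕ, ∀ t : ℝ, 0 ≤ t →
      |iteratedDeriv n y₂ t| ≤ Fb * Mb ^ n * (Nat.factorial n : ℝ) ^ γ) :
    (∀ x ∈ Set.Icc (0:ℝ) 1, ∀ t : ℝ, 0 ≤ t →
      Summable (planTerm1 ε a b x₀ y₁ x t) ∧ Summable (planTerm2 ε a b x₀ y₂ x t)) ∧
    ∃ vx vxx vt : ℝ → ℝ → ℝ,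
      (∀ x ∈ Set.Icc (0:ℝ) 1, ∀ t : ℝ, 0 ≤ t →
        HasDerivAt (fun y => vPlan ε a b x₀ y₁ y₂ y t) (vx x t) x ∧
        HasDerivAt (fun y => vx y t) (vxx x t) x) ∧
      (∀ x ∈ Set.Icc (0:ℝ) 1, ∀ t : ℝ, 0 < t →
        HasDerivAt (fun s => vPlan ε a b x₀ y₁ y₂ x s) (vt x t) t) ∧
      ContinuousOn (fun q : ℝ × ℝ => vPlan ε a b x₀ y₁ y₂ q.1 q.2)
        (Set.Icc 0 1 ×ˢ Set.Ioi 0) ∧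
      ContinuousOn (fun q : ℝ × ℝ => vx q.1 q.2) (Set.Icc 0 1 ×ˢ Set.Ioi 0) ∧
      ContinuousOn (fun q : ℝ × ℝ => vxx q.1 q.2) (Set.Icc 0 1 ×ˢ Set.Ioi 0) ∧
      ContinuousOn (fun q : ℝ × ℝ => vt q.1 q.2) (Set.Icc 0 1 ×ˢ Set.Ioi 0) ∧
      (∀ x ∈ Set.Icc (0:ℝ) 1, ∀ t : ℝ, 0 < t →
        vt x t = ε * vxx x t - a ^ 2 * b ^ 2 / (4 * ε) * vPlan ε a b x₀ y₁ y₂ x t) ∧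
      (∀ t : ℝ, 0 ≤ t →
        vPlan ε a b x₀ y₁ y₂ x₀ t = y₁ t ∧ vx x₀ t = y₂ t) := by
  set μ : ℝ := a ^ 2 * b ^ 2 / (4 * ε) with hμdef
  have hμ : 0 ≤ μ := by positivity
  have hγ0 : 0 ≤ γ := by linarith
  have hK : 0 ≤ (Mb + μ) / ε := by positivity
  have hF := hFb.le
  have B₁ := abs_planCoeff_le hε hμ hF hMb.le hγ0 hb₁
  have B₂ := abs_planCoeff_le hε hμ hF hMb.le hγ0 hb₂
  have D₁ := hasDerivAt_planCoeff (μ := μ) hε hy₁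
  have D₂ := hasDerivAt_planCoeff (μ := μ) hε hy₂
  have C₁ : ∀ k, Continuous (planCoeff ε μ y₁ k) := fun k =>
    continuous_iff_continuousAt.2 fun t => (D₁ k t).continuousAt
  have C₂ : ∀ k, Continuous (planCoeff ε μ y₂ k) := fun k =>
    continuous_iff_continuousAt.2 fun t => (D₂ k t).continuousAt
  set c₁ := planCoeff ε μ y₁ with hc₁
  set c₂ := planCoeff ε μ y₂ with hc₂
  have hv : ∀ x t, vPlan ε a b x₀ y₁ y₂ x t
      = shiftSeries c₁ x₀ 0 0 x t + shiftSeries c₂ x₀ 1 0 x t := fun x t => by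
    simp only [vPlan, planTerm1_eq, planTerm2_eq]
    rfl
  -- The strict bound by `2` leaves room around the endpoints of `[0,1]` for two-sided derivatives.
  have hlt : ∀ x ∈ Set.Icc (0 : ℝ) 1, |x - x₀| < 2 := fun x hx => by
    rw [abs_lt]
    constructor <;> linarith [hx.1, hx.2, hx₀.1, hx₀.2]
  have hle : ∀ x ∈ Set.Icc (0 : ℝ) 1, |x - x₀| ≤ 2 := fun x hx => (hlt x hx).le
  have cont₁ := fun p j => continuousOn_shiftSeries B₁ hF hK hγ0 hγ2 C₁ p j hle
  have cont₂ := fun p j => continuousOn_shiftSeries B₂ hF hK hγ0 hγ2 C₂ p j hle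
  have contv := (cont₁ 0 0).add (cont₂ 1 0)
  have contvxx := (cont₁ 0 1).add (cont₂ 1 1)
  simp only [hv]
  refine ⟨fun x hx t ht => ?_,
    fun x t => shiftSeries c₁ x₀ 1 1 x t + shiftSeries c₂ x₀ 0 0 x t,
    fun x t => shiftSeries c₁ x₀ 0 1 x t + shiftSeries c₂ x₀ 1 1 x t,
    fun x t => ε * (shiftSeries c₁ x₀ 0 1 x t + shiftSeries c₂ x₀ 1 1 x t)
      - μ * (shiftSeries c₁ x₀ 0 0 x t + shiftSeries c₂ x₀ 1 0 x t),
    fun x hx t ht => ⟨?_, ?_⟩, fun x hx t ht => ?_, contv, (cont₁ 1 1).add (cont₂ 0 0), contvxx,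
    (contvxx.const_mul ε).sub (contv.const_mul μ), fun x _ t _ => rfl, fun t ht => ?_⟩
  · rw [planTerm1_eq, planTerm2_eq]
    exact ⟨summable_shiftTerm B₁ hF hK hγ0 hγ2 x₀ 0 0 (hle x hx) ht,
      summable_shiftTerm B₂ hF hK hγ0 hγ2 x₀ 1 0 (hle x hx) ht⟩
  · exact (hasDerivAt_shiftSeries_zero B₁ hF hK hγ0 hγ2 x₀ 0 (hlt x hx) ht).add
      (hasDerivAt_shiftSeries_succ B₂ hF hK hγ0 hγ2 x₀ 0 0 (hlt x hx) ht)
  · exact (hasDerivAt_shiftSeries_succ B₁ hF hK hγ0 hγ2 x₀ 0 1 (hlt x hx) ht).add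
      (hasDerivAt_shiftSeries_zero B₂ hF hK hγ0 hγ2 x₀ 0 (hlt x hx) ht)
  · refine ((hasDerivAt_shiftSeries_time B₁ hF hK hγ0 hγ2 D₁ x₀ 0 0 (hle x hx) ht).add
      (hasDerivAt_shiftSeries_time B₂ hF hK hγ0 hγ2 D₂ x₀ 1 0 (hle x hx) ht)).congr_deriv ?_
    ring
  · have hself : |x₀ - x₀| ≤ 2 := by simp
    beta_reduce
    rw [shiftSeries_zero_eq B₁ hF hK hγ0 hγ2 x₀ 0 hself ht,
      shiftSeries_zero_eq B₂ hF hK hγ0 hγ2 x₀ 0 hself ht]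
    simp [shiftSeries_succ_self, hc₁, hc₂, planCoeff]
end
end

section
/- Let ε > 0 and a, b ∈ ℝ with a ≠ 0. Let u : ℝ × ℝ → ℝ and (x,t) a point at which u has continuous partial derivatives u_t, u_x, u_{xx}. If u_t(x,t) = ε·u_{xx}(x,t) − a·u_x(x,t)·(b + u_x(x,t)), then: (i) the function v̄(x,t) = e^{−(a/ε)u(x,t)} − 1 satisfies v̄_t(x,t) = ε·v̄_{xx}(x,t) − a·b·v̄_x(x,t); and (ii) the function v(x,t) = v̄(x,t)·e^{−(ab/2ε)x} satisfies v_t(x,t) = ε·v_{xx}(x,t) − (a²b²/(4ε))·v(x,t). -/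
/-!
Writing `E = e^{−(a/ε)u}`, the chain rule gives `E_t = −(a/ε) u_t E` and
`E_xx = ((a/ε)² u_x² − (a/ε) u_xx) E`; substituting the equation for `u_t`, the quadratic
terms in `u_x` cancel and `v̄ = E − 1` solves the linear advection–diffusion equation.
For `v = v̄ e^{cx}` one has `v_xx = (v̄_xx + 2c v̄_x + c² v̄) e^{cx}`, and `c = −ab/(2ε)` is the value
for which the term `2cε v̄_x = −ab v̄_x` absorbs the advection, leaving
`c²ε = a²b²/(4ε)` as the reaction coefficient.
-/

noncomputable section

/-- The Hopf–Cole-type feedback linearizing transformation: if `u` solves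
`u_t = ε u_{xx} − a u_x (b + u_x)` at `(x,t)`, then `v̄ = e^{−(a/ε)u} − 1` solves
`v̄_t = ε v̄_{xx} − a b v̄_x` and `v = v̄ e^{−(ab/2ε)x}` solves
`v_t = ε v_{xx} − (a²b²/(4ε)) v` at `(x,t)`. -/
theorem hopf_cole_linearization (ε a b : ℝ) (hε : 0 < ε) (ha : a ≠ 0)
    (u ut ux uxx : ℝ → ℝ → ℝ) (x t : ℝ)
    (hut : ∀ x' t' : ℝ, HasDerivAt (fun s => u x' s) (ut x' t') t')
    (hux : ∀ x' t' : ℝ, HasDerivAt (fun y => u y t') (ux x' t') x')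
    (huxx : ∀ x' t' : ℝ, HasDerivAt (fun y => ux y t') (uxx x' t') x')
    (hctu : ContinuousAt (fun q : ℝ × ℝ => ut q.1 q.2) (x, t))
    (hcux : ContinuousAt (fun q : ℝ × ℝ => ux q.1 q.2) (x, t))
    (hcuxx : ContinuousAt (fun q : ℝ × ℝ => uxx q.1 q.2) (x, t))
    (hpde : ut x t = ε * uxx x t - a * ux x t * (b + ux x t)) :
    (deriv (fun s => Real.exp (-(a / ε) * u x s) - 1) t =
        ε * deriv (fun y => deriv (fun y' => Real.exp (-(a / ε) * u y' t) - 1) y) x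
          - a * b * deriv (fun y => Real.exp (-(a / ε) * u y t) - 1) x) ∧
    (deriv (fun s => (Real.exp (-(a / ε) * u x s) - 1) *
          Real.exp (-(a * b / (2 * ε)) * x)) t =
        ε * deriv (fun y => deriv (fun y' => (Real.exp (-(a / ε) * u y' t) - 1) *
              Real.exp (-(a * b / (2 * ε)) * y')) y) x
          - a ^ 2 * b ^ 2 / (4 * ε) *
            ((Real.exp (-(a / ε) * u x t) - 1) * Real.exp (-(a * b / (2 * ε)) * x))) := by
  have hε' : ε ≠ 0 := hε.ne'
  have hE : ∀ y, HasDerivAt (fun y' => Real.exp (-(a / ε) * u y' t))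
      (Real.exp (-(a / ε) * u y t) * (-(a / ε) * ux y t)) y := fun y =>
    ((hux y t).const_mul _).exp
  have h₁ : ∀ y, HasDerivAt (fun y' => Real.exp (-(a / ε) * u y' t) - 1)
      (Real.exp (-(a / ε) * u y t) * (-(a / ε) * ux y t)) y := fun y =>
    (hE y).sub_const 1
  have h₂ := (hE x).fun_mul ((huxx x t).const_mul (-(a / ε)))
  have ht : HasDerivAt (fun s => Real.exp (-(a / ε) * u x s) - 1)
      (Real.exp (-(a / ε) * u x t) * (-(a / ε) * ut x t)) t :=
    (((hut x t).const_mul _).exp).sub_const 1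
  have hg : ∀ y, HasDerivAt (fun y' => Real.exp (-(a * b / (2 * ε)) * y'))
      (Real.exp (-(a * b / (2 * ε)) * y) * (-(a * b / (2 * ε)) * 1)) y := fun y =>
    ((hasDerivAt_id' y).const_mul _).exp
  have hv := fun y => (h₁ y).fun_mul (hg y)
  have hvv := (h₂.fun_mul (hg x)).fun_add ((h₁ x).fun_mul ((hg x).mul_const (-(a * b / (2 * ε)) * 1)))
  constructor
  · rw [ht.deriv, (h₁ x).deriv, funext fun y => (h₁ y).deriv, h₂.deriv, hpde]
    field_simp
    ring
  · rw [(ht.mul_const _).deriv, funext fun y => (hv y).deriv, hvv.deriv, hpde]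
    generalize Real.exp (-(a / ε) * u x t) = E
    generalize Real.exp (-(a * b / (2 * ε)) * x) = G
    field_simp
    ring

end
end

section
/- Let ε > 0 and a, b ∈ ℝ with a ≠ 0. Let uʳ : ℝ × ℝ → ℝ satisfy the viscous Hamilton–Jacobi equation uʳ_t = ε·uʳ_{xx} − a·uʳ_x·(b + uʳ_x) at a point (x,t) (with continuous derivatives uʳ_t, uʳ_x, uʳ_{xx}), and let ũ : ℝ × ℝ → ℝ have continuous derivatives ũ_t, ũ_x, ũ_{xx} at (x,t) and satisfy the error dynamics ũ_t = ε·ũ_{xx} − a·ũ_x·(b + ũ_x) − 2a·uʳ_x·ũ_x at (x,t). Then: (i) the function ṽ̄(x,t) = e^{−(a/ε)ũ(x,t)} − 1 satisfies ṽ̄_t(x,t) = ε·ṽ̄_{xx}(x,t) − a·(b + 2uʳ_x(x,t))·ṽ̄_x(x,t); and (ii) the function ṽ(x,t) = ṽ̄(x,t)·e^{−(ab/2ε)x − (a/ε)uʳ(x,t)} satisfies ṽ_t(x,t) = ε·ṽ_{xx}(x,t) − (a²b²/(4ε))·ṽ(x,t). -/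
/-!
Write `k = a / ε`. The Hopf–Cole function `exp (-k U)` of a solution `U` of the viscous
Hamilton–Jacobi equation solves a linear equation: the term `ε k² U_x²` coming from `ε ∂_x²` is
exactly `k` times the quadratic term `a U_x²`. The error dynamics are the same equation with drift
`b + 2 uʳ_x` in place of `b`, so the same cancellation gives the equation of `ṽ̄`. The weight
`E = exp (-(ab/2ε) x - k uʳ)` then absorbs the drift: since `2 ε E_x = -a (b + 2 uʳ_x) E`, the cross
term `2 ε ṽ̄_x E_x` of `ε (ṽ̄ E)_xx` is the drift term of `ṽ̄` times `E`, and
`E_t = ε E_xx - (a²b²/4ε) E` by the equation of `uʳ`.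

All functions involved are exponentials, so the argument is a computation of their first and second
derivatives followed by an identity in the field of real numbers.
-/

noncomputable section

/-- Feedback linearization of the tracking-error dynamics: if `uʳ` solves the viscous
Hamilton–Jacobi equation and `ũ` solves the error dynamics
`ũ_t = ε ũ_{xx} − a ũ_x (b + ũ_x) − 2 a uʳ_x ũ_x` at `(x,t)`, then
`ṽ̄ = e^{−(a/ε)ũ} − 1` solves `ṽ̄_t = ε ṽ̄_{xx} − a (b + 2uʳ_x) ṽ̄_x` and
`ṽ = ṽ̄ e^{−(ab/2ε)x − (a/ε)uʳ}` solves `ṽ_t = ε ṽ_{xx} − (a²b²/(4ε)) ṽ` at `(x,t)`. -/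
theorem error_feedback_linearization (ε a b : ℝ) (hε : 0 < ε) (ha : a ≠ 0)
    (ur urt urx urxx tu tut tux tuxx : ℝ → ℝ → ℝ) (x t : ℝ)
    (hurt : ∀ x' t' : ℝ, HasDerivAt (fun s => ur x' s) (urt x' t') t')
    (hurx : ∀ x' t' : ℝ, HasDerivAt (fun y => ur y t') (urx x' t') x')
    (hurxx : ∀ x' t' : ℝ, HasDerivAt (fun y => urx y t') (urxx x' t') x')
    (htut : ∀ x' t' : ℝ, HasDerivAt (fun s => tu x' s) (tut x' t') t')
    (htux : ∀ x' t' : ℝ, HasDerivAt (fun y => tu y t') (tux x' t') x')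
    (htuxx : ∀ x' t' : ℝ, HasDerivAt (fun y => tux y t') (tuxx x' t') x')
    (hcurt : ContinuousAt (fun q : ℝ × ℝ => urt q.1 q.2) (x, t))
    (hcurx : ContinuousAt (fun q : ℝ × ℝ => urx q.1 q.2) (x, t))
    (hcurxx : ContinuousAt (fun q : ℝ × ℝ => urxx q.1 q.2) (x, t))
    (hctut : ContinuousAt (fun q : ℝ × ℝ => tut q.1 q.2) (x, t))
    (hctux : ContinuousAt (fun q : ℝ × ℝ => tux q.1 q.2) (x, t))
    (hctuxx : ContinuousAt (fun q : ℝ × ℝ => tuxx q.1 q.2) (x, t))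
    (hpder : urt x t = ε * urxx x t - a * urx x t * (b + urx x t))
    (hpdee : tut x t = ε * tuxx x t - a * tux x t * (b + tux x t)
        - 2 * a * urx x t * tux x t) :
    (deriv (fun s => Real.exp (-(a / ε) * tu x s) - 1) t =
        ε * deriv (fun y => deriv (fun y' => Real.exp (-(a / ε) * tu y' t) - 1) y) x
          - a * (b + 2 * urx x t) *
              deriv (fun y => Real.exp (-(a / ε) * tu y t) - 1) x) ∧
    (deriv (fun s => (Real.exp (-(a / ε) * tu x s) - 1) *
          Real.exp (-(a * b / (2 * ε)) * x - (a / ε) * ur x s)) t =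
        ε * deriv (fun y => deriv (fun y' => (Real.exp (-(a / ε) * tu y' t) - 1) *
              Real.exp (-(a * b / (2 * ε)) * y' - (a / ε) * ur y' t)) y) x
          - a ^ 2 * b ^ 2 / (4 * ε) *
              ((Real.exp (-(a / ε) * tu x t) - 1) *
                Real.exp (-(a * b / (2 * ε)) * x - (a / ε) * ur x t))) := by
  have hε' : ε ≠ 0 := hε.ne'
  have hAt : HasDerivAt (fun s => Real.exp (-(a / ε) * tu x s) - 1)
      (Real.exp (-(a / ε) * tu x t) * (-(a / ε) * tut x t)) t :=
    (((htut x t).const_mul (-(a / ε))).exp).sub_const 1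
  have hAx (y : ℝ) : HasDerivAt (fun y => Real.exp (-(a / ε) * tu y t) - 1)
      (Real.exp (-(a / ε) * tu y t) * (-(a / ε) * tux y t)) y :=
    (((htux y t).const_mul (-(a / ε))).exp).sub_const 1
  have hAxx : HasDerivAt (fun y => Real.exp (-(a / ε) * tu y t) * (-(a / ε) * tux y t))
      (Real.exp (-(a / ε) * tu x t) * (-(a / ε) * tux x t) * (-(a / ε) * tux x t) +
        Real.exp (-(a / ε) * tu x t) * (-(a / ε) * tuxx x t)) x :=
    (((htux x t).const_mul (-(a / ε))).exp).mul ((htuxx x t).const_mul (-(a / ε)))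
  have hEt : HasDerivAt (fun s => Real.exp (-(a * b / (2 * ε)) * x - (a / ε) * ur x s))
      (Real.exp (-(a * b / (2 * ε)) * x - (a / ε) * ur x t) * (-((a / ε) * urt x t))) t :=
    (((hurt x t).const_mul (a / ε)).const_sub (-(a * b / (2 * ε)) * x)).exp
  have hEx (y : ℝ) : HasDerivAt (fun y => Real.exp (-(a * b / (2 * ε)) * y - (a / ε) * ur y t))
      (Real.exp (-(a * b / (2 * ε)) * y - (a / ε) * ur y t) *
        (-(a * b / (2 * ε)) * 1 - (a / ε) * urx y t)) y :=
    (((hasDerivAt_id' y).const_mul (-(a * b / (2 * ε)))).sub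
      ((hurx y t).const_mul (a / ε))).exp
  have hExx : HasDerivAt (fun y => Real.exp (-(a * b / (2 * ε)) * y - (a / ε) * ur y t) *
        (-(a * b / (2 * ε)) * 1 - (a / ε) * urx y t))
      (Real.exp (-(a * b / (2 * ε)) * x - (a / ε) * ur x t) *
          (-(a * b / (2 * ε)) * 1 - (a / ε) * urx x t) *
          (-(a * b / (2 * ε)) * 1 - (a / ε) * urx x t) +
        Real.exp (-(a * b / (2 * ε)) * x - (a / ε) * ur x t) * (-((a / ε) * urxx x t))) x :=
    (hEx x).mul (((hurxx x t).const_mul (a / ε)).const_sub (-(a * b / (2 * ε)) * 1))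
  constructor
  · rw [hAt.deriv, (hAx x).deriv, funext fun y => (hAx y).deriv, hAxx.deriv, hpdee]
    field_simp
    ring
  · have hVx : (fun y => deriv (fun y' => (Real.exp (-(a / ε) * tu y' t) - 1) *
        Real.exp (-(a * b / (2 * ε)) * y' - (a / ε) * ur y' t)) y) = _ :=
      funext fun y => ((hAx y).mul (hEx y)).deriv
    have hVxx := (hAxx.mul (hEx x)).add ((hAx x).mul hExx)
    rw [hVx]
    refine (hAt.mul hEt).deriv.trans (Eq.trans ?_ (congrArg (fun z => ε * z - _) hVxx.deriv.symm))
    rw [hpdee, hpder]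
    -- The exponentials are opaque to the remaining identity, which is polynomial in them.
    generalize Real.exp (-(a / ε) * tu x t) = A
    generalize Real.exp (-(a * b / (2 * ε)) * x - (a / ε) * ur x t) = E
    field_simp
    ring

end
end

section
/- Let ε > 0 and c₂ > 0. Define p : ℝ × ℝ → ℝ by p(z,y) = −(c₂/(4ε))·(y + z)·Φ((c₂/(4ε))·(y² − z²)). Then p is smooth on ℝ² and satisfies: (i) ε·∂²p/∂y²(z,y) − ε·∂²p/∂z²(z,y) = c₂·p(z,y) for all (z,y) ∈ ℝ²; (ii) p(z,z) = −(c₂/(2ε))·z for all z ∈ ℝ; and (iii) p(z,−z) = 0 for all z ∈ ℝ. -/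
/-!
The functions `Φ_k(s) = Σ sᵐ / (m! (m+k)!)` satisfy `Φ_k' = Φ_{k+1}` (termwise differentiation,
dominated by the exponential series), so every `Φ_k` is smooth. Comparing coefficients gives the
recurrence `s Φ_{k+2} + (k+1) Φ_{k+1} = Φ_k`; for `k = 1` it says that `Φ = Φ_1` solves
`s Φ'' + 2 Φ' = Φ`. With `a = c₂/(4ε)` and `u = a (y² - z²)`, the chain rule yields
`(∂_y² - ∂_z²) ((y+z) Φ(u)) = 4a (y+z) (u Φ''(u) + 2 Φ'(u)) = (c₂/ε) (y+z) Φ(u)`.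
The boundary values follow from `Φ(0) = 1` and from the factor `y + z`.
-/

noncomputable section

/-- The entire function `Φ(s) = Σ_{m=0}^∞ sᵐ/(m!·(m+1)!)`, so that
`I₁(2√s) = √s·Φ(s)` for `s ≥ 0`. -/
def Phi (s : ℝ) : ℝ :=
  ∑' m : ℕ, s ^ m / ((Nat.factorial m : ℝ) * (Nat.factorial (m + 1) : ℝ))

/-- The backstepping observer kernel
`p(z,y) = −(c₂/(4ε))·(y+z)·Φ((c₂/(4ε))(y²−z²))`. -/
def pKer (ε c₂ z y : ℝ) : ℝ :=
  -(c₂ / (4 * ε)) * (y + z) * Phi (c₂ / (4 * ε) * (y ^ 2 - z ^ 2))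

/-- The series `Φ_k(s) = Σ sᵐ / (m! (m+k)!)`; `Phi` is the case `k = 1`. -/
def besselSeries (k : ℕ) (s : ℝ) : ℝ :=
  ∑' m : ℕ, s ^ m / ((Nat.factorial m : ℝ) * (Nat.factorial (m + k) : ℝ))

lemma Phi_eq_besselSeries : Phi = besselSeries 1 := rfl

lemma one_le_factorial_real (n : ℕ) : (1 : ℝ) ≤ (Nat.factorial n : ℝ) := by
  exact_mod_cast Nat.succ_le_of_lt (Nat.factorial_pos n)

lemma summable_besselSeries (k : ℕ) (s : ℝ) :
    Summable fun m : ℕ => s ^ m / ((Nat.factorial m : ℝ) * (Nat.factorial (m + k) : ℝ)) := by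
  refine Summable.of_norm_bounded (Real.summable_pow_div_factorial |s|) fun m => ?_
  rw [Real.norm_eq_abs, abs_div, abs_pow, abs_of_pos (by positivity :
    (0 : ℝ) < (Nat.factorial m : ℝ) * (Nat.factorial (m + k) : ℝ))]
  gcongr
  exact le_mul_of_one_le_right (by positivity) (one_le_factorial_real _)

lemma succ_term_deriv (k m : ℕ) (s : ℝ) :
    ((m + 1 : ℕ) : ℝ) * s ^ (m + 1 - 1) /
      ((Nat.factorial (m + 1) : ℝ) * (Nat.factorial (m + 1 + k) : ℝ)) =
    s ^ m / ((Nat.factorial m : ℝ) * (Nat.factorial (m + (k + 1)) : ℝ)) := by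
  rw [show m + 1 + k = m + (k + 1) by ring, Nat.factorial_succ m, Nat.add_sub_cancel]
  push_cast
  have h : (m : ℝ) + 1 ≠ 0 := by positivity
  field_simp

lemma hasDerivAt_besselSeries (k : ℕ) (s : ℝ) :
    HasDerivAt (besselSeries k) (besselSeries (k + 1) s) s := by
  set R : ℝ := |s| + 1 with hR
  have hs : s ∈ Metric.ball (0 : ℝ) R := by simp [hR]
  have hu : Summable fun m : ℕ => (m : ℝ) * R ^ (m - 1) /
      ((Nat.factorial m : ℝ) * (Nat.factorial (m + k) : ℝ)) := by
    rw [← summable_nat_add_iff 1]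
    simp_rw [succ_term_deriv]
    exact summable_besselSeries (k + 1) R
  have key := hasDerivAt_tsum_of_isPreconnected (t := Metric.ball (0 : ℝ) R)
    (g := fun (m : ℕ) (x : ℝ) =>
      x ^ m / ((Nat.factorial m : ℝ) * (Nat.factorial (m + k) : ℝ)))
    (g' := fun (m : ℕ) (x : ℝ) => (m : ℝ) * x ^ (m - 1) /
      ((Nat.factorial m : ℝ) * (Nat.factorial (m + k) : ℝ)))
    hu Metric.isOpen_ball (convex_ball (0 : ℝ) R).isPreconnected
    (fun m x _ => (hasDerivAt_pow m x).div_const _)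
    (fun m x hx => by
      have hx' : |x| ≤ R := by simpa using (Metric.mem_ball.1 hx).le
      rw [Real.norm_eq_abs, abs_div, abs_mul, abs_pow, Nat.abs_cast, abs_of_pos (by positivity :
        (0 : ℝ) < (Nat.factorial m : ℝ) * (Nat.factorial (m + k) : ℝ))]
      gcongr)
    hs (summable_besselSeries k s) hs
  have hsum : (∑' m : ℕ, (m : ℝ) * s ^ (m - 1) /
      ((Nat.factorial m : ℝ) * (Nat.factorial (m + k) : ℝ))) = besselSeries (k + 1) s := by
    have h0 : Summable fun m : ℕ => (m : ℝ) * s ^ (m - 1) /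
        ((Nat.factorial m : ℝ) * (Nat.factorial (m + k) : ℝ)) := by
      rw [← summable_nat_add_iff 1]
      simp_rw [succ_term_deriv]
      exact summable_besselSeries (k + 1) s
    rw [h0.tsum_eq_zero_add]
    simp_rw [succ_term_deriv]
    simp [besselSeries]
  rw [← hsum]
  exact key

lemma contDiff_besselSeries_nat (n k : ℕ) : ContDiff ℝ n (besselSeries k) := by
  induction n generalizing k with
  | zero =>
    exact contDiff_zero.2 (continuous_iff_continuousAt.2 fun s =>
      (hasDerivAt_besselSeries k s).continuousAt)
  | succ n ih =>
    push_cast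
    refine contDiff_succ_iff_deriv.2
      ⟨fun s => (hasDerivAt_besselSeries k s).differentiableAt, by simp, ?_⟩
    rw [show deriv (besselSeries k) = besselSeries (k + 1) from
      funext fun s => (hasDerivAt_besselSeries k s).deriv]
    exact ih (k + 1)

lemma contDiff_besselSeries (k : ℕ) : ContDiff ℝ (⊤ : ℕ∞) (besselSeries k) :=
  contDiff_infty.2 fun n => contDiff_besselSeries_nat n k

/-- The Bessel-type recurrence; for `k = 1` it is the equation `s Φ'' + 2 Φ' = Φ`. -/
lemma besselSeries_recurrence (k : ℕ) (s : ℝ) :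
    s * besselSeries (k + 2) s + (k + 1) * besselSeries (k + 1) s = besselSeries k s := by
  have h1 := summable_besselSeries (k + 1) s
  have h2 := summable_besselSeries (k + 2) s
  have h0 := summable_besselSeries k s
  unfold besselSeries
  -- Only the two series with a constant term are split, so that all three sums start at `s¹`.
  rw [h0.tsum_eq_zero_add, h1.tsum_eq_zero_add, ← tsum_mul_left, mul_add, ← tsum_mul_left,
    add_left_comm, ← (h2.mul_left s).tsum_add
      (((summable_nat_add_iff 1).2 h1).mul_left ((k : ℝ) + 1))]
  congr 1
  · simp only [zero_add, Nat.factorial_succ k]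
    push_cast
    have h : (k : ℝ) + 1 ≠ 0 := by positivity
    field_simp
  · refine tsum_congr fun m => ?_
    rw [show m + (k + 2) = (m + 1 + k) + 1 by ring, show m + 1 + (k + 1) = (m + 1 + k) + 1 by ring,
      Nat.factorial_succ (m + 1 + k), Nat.factorial_succ m]
    push_cast
    have h : (m : ℝ) + 1 ≠ 0 := by positivity
    have h' : (m : ℝ) + 1 + k + 1 ≠ 0 := by positivity
    field_simp
    ring

lemma besselSeries_one_zero : besselSeries 1 0 = 1 := by
  unfold besselSeries
  rw [tsum_eq_single 0 (fun m hm => by simp [hm])]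
  simp

/-- Second derivative of `A (x + b) Φ(d x² + e)`. Both `y ↦ p(z,y)` and `z ↦ p(z,y)` have this
form, with `d = c₂/(4ε)` and `d = -c₂/(4ε)` respectively. -/
lemma iteratedDeriv_two_profile (A b d e x : ℝ) :
    iteratedDeriv 2 (fun t => A * (t + b) * besselSeries 1 (d * t ^ 2 + e)) x =
      A * (4 * d * x * besselSeries 2 (d * x ^ 2 + e) + (x + b) *
        (2 * d * besselSeries 2 (d * x ^ 2 + e) +
          4 * d ^ 2 * x ^ 2 * besselSeries 3 (d * x ^ 2 + e))) := by
  have hin (t : ℝ) : HasDerivAt (fun t : ℝ => d * t ^ 2 + e) (d * (2 * t)) t := by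
    simpa using ((hasDerivAt_pow 2 t).const_mul d).add_const e
  have hF (k : ℕ) (t : ℝ) : HasDerivAt (fun t => besselSeries k (d * t ^ 2 + e))
      (besselSeries (k + 1) (d * t ^ 2 + e) * (d * (2 * t))) t :=
    (hasDerivAt_besselSeries k _).comp t (hin t)
  have hL (t : ℝ) : HasDerivAt (fun t : ℝ => A * (t + b)) A t := by
    simpa using ((hasDerivAt_id t).add_const b).const_mul A
  have hd : deriv (fun t => A * (t + b) * besselSeries 1 (d * t ^ 2 + e)) = fun t =>
      A * besselSeries 1 (d * t ^ 2 + e) +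
        A * (t + b) * (besselSeries 2 (d * t ^ 2 + e) * (d * (2 * t))) :=
    funext fun t => ((hL t).mul (hF 1 t)).deriv
  have hM : HasDerivAt (fun t : ℝ => d * (2 * t)) (d * 2) x := by
    simpa using ((hasDerivAt_id x).const_mul 2).const_mul d
  rw [iteratedDeriv_succ, iteratedDeriv_one, hd]
  refine (((hF 1 x).const_mul A).add ((hL x).mul ((hF 2 x).mul hM))).deriv.trans ?_
  simp only [Pi.mul_apply]
  ring

/-- The observer kernel `p` is smooth and satisfies the kernel PDE
`ε p_{yy} − ε p_{zz} = c₂ p` with boundary conditions `p(z,z) = −(c₂/(2ε))z`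
and `p(z,−z) = 0`. -/
theorem observer_kernel_equations (ε c₂ : ℝ) (hε : 0 < ε) (hc₂ : 0 < c₂) :
    ContDiff ℝ (⊤ : ℕ∞) (fun q : ℝ × ℝ => pKer ε c₂ q.1 q.2) ∧
    (∀ z y : ℝ,
      ε * iteratedDeriv 2 (fun y' => pKer ε c₂ z y') y
        - ε * iteratedDeriv 2 (fun z' => pKer ε c₂ z' y) z = c₂ * pKer ε c₂ z y) ∧
    (∀ z : ℝ, pKer ε c₂ z z = -(c₂ / (2 * ε)) * z) ∧
    (∀ z : ℝ, pKer ε c₂ z (-z) = 0) := by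
  refine ⟨?_, fun z y => ?_, fun z => ?_, fun z => ?_⟩
  · have h : ContDiff ℝ (⊤ : ℕ∞) (fun q : ℝ × ℝ =>
        besselSeries 1 (c₂ / (4 * ε) * (q.2 ^ 2 - q.1 ^ 2))) :=
      (contDiff_besselSeries 1).comp (by fun_prop)
    unfold pKer
    rw [Phi_eq_besselSeries]
    fun_prop
  · obtain ⟨a, ha⟩ : ∃ a, a = c₂ / (4 * ε) := ⟨_, rfl⟩
    have hc : c₂ = 4 * a * ε := by rw [ha]; field_simp
    have hy : (fun y' => pKer ε c₂ z y') =
        fun t => -a * (t + z) * besselSeries 1 (a * t ^ 2 + -(a * z ^ 2)) := by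
      funext t
      rw [pKer, Phi_eq_besselSeries, ← ha]
      ring_nf
    have hz : (fun z' => pKer ε c₂ z' y) =
        fun t => -a * (t + y) * besselSeries 1 (-a * t ^ 2 + a * y ^ 2) := by
      funext t
      rw [pKer, Phi_eq_besselSeries, ← ha]
      ring_nf
    have hode := besselSeries_recurrence 1 (a * (y ^ 2 - z ^ 2))
    norm_num at hode
    rw [hy, hz, iteratedDeriv_two_profile, iteratedDeriv_two_profile, pKer, Phi_eq_besselSeries,
      ← ha, ← hode, show a * y ^ 2 + -(a * z ^ 2) = a * (y ^ 2 - z ^ 2) by ring,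
      show -a * z ^ 2 + a * y ^ 2 = a * (y ^ 2 - z ^ 2) by ring, hc]
    ring
  · rw [pKer, Phi_eq_besselSeries, sub_self, mul_zero, besselSeries_one_zero]
    field_simp
    ring
  · simp [pKer]

end
end
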